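/- arXiv:1402.4721 — 6 statements merged into one kernel-verified Lean document; each statement's English description precedes it below -/
import Mathlib

section
/- Let k ≥ 1, let λ1, ..., λk be coprime nonzero integers, and let A be a finite subset of the integers. Then |λ1·A + ... + λk·A| ≥ (|λ1| + ... + |λk|)·|A| − C, where one may take the explicit constant C = (1/3)·binom(k+1, 2)·|λ1 ⋯ λk|^{(k−1)(|λ1| + ... + |λk|)² + k − 1}. -/
open Pointwise

/-!
Write `S(A) = ∑ l j · A`, `σ = ∑ |l j|` and `P = ∏ |l j|`. By induction on the number `n + 1` of
dilates, the stronger bound `|S(A)| ≥ σ |A| - n P ^ (n (σ² + 1))` holds (`card_dilSum_ge`); since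
`n ≤ binom (n + 2) 2 / 3`, it implies the theorem. The case of one dilate is trivial. Otherwise let
`d i` be the gcd of the `l j` with `j ≠ i`; it is coprime to `l i`, so an element of `S(A)`
determines its `i`-th entry modulo `d i`, and restricting the `i`-th entry to different classes
modulo `d i` gives disjoint subsets of `S(A)`.

*Fully distributed sets.* Suppose `A` meets every class modulo `d i`, for every `i`. Splitting every
entry by residues cuts `S(A)` into `∏ d i` disjoint sumsets. Superadditivity of sumset sizes
(`sum_card_erase_le`: a sumset of `k` sets is, up to a constant, at least `1 / (k - 1)` times the
total size of the `k` sumsets omitting one summand) applied to each piece bounds `|S(A)|` from below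
by `(k - 1)⁻¹ ∑ d i |∑_{j ≠ i} l j · A|` up to a constant. The inner sums have one dilate fewer, and
after division by `d i` the induction hypothesis gives slope `σ`.

*Other sets.* Starting from slope `0`, a bound of slope `c` for all sets is improved to slope
`c + 1 / σ` (`DilateData.improve`), by induction on `|A|` and with an error term proportional to the
product of the moduli `d i` for which `A` misses a class. After an affine change of variables, only
units divide all differences of elements of `A`. Choose `i` such that `A` misses a class modulo
`d i`. If a class of `A` modulo `d i` has at most `|A| / σ` elements, remove it: the sums using it
in the `i`-th entry number at least `|A|`, and the rest of `A` is handled by induction, or by the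
second gain below if it misses a class modulo some `d j` which `A` meets. If all classes are larger,
each class `A_r = r + d i · X` contributes separately through the sums with `i`-th entry in `A_r`.
If `X` still misses a class
modulo `d i`, putting a suitable class of `A` in some other entry reaches new residues modulo
`(d i)²`, a gain of more than `|A| / σ` (`DilateData.gain_of_not_fullyDist`). If `A_r` misses a
class modulo some `d j` which `A` meets, there is a gain of `|A_r|` (`DilateData.gain_of_lost`).
Otherwise `d i` is no longer among the moduli with a missed class of `X`, so that the induction
hypothesis for `X` has an error term smaller by a factor `d i`, which pays for summing over at most
`d i` classes. After `σ²` improvements the slope is `σ`.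
-/

/-! ### Sums of dilates -/

/-- The sum of dilates `∑ j ∈ I, l j · B j`, where each dilate may use its own set `B j`. -/
def dilSum {ι : Type*} (I : Finset ι) (l : ι → ℤ) (B : ι → Finset ℤ) : Finset ℤ :=
  ∑ j ∈ I, (B j).image (fun a => l j * a)

section Basic

variable {ι : Type*} {I : Finset ι} {l : ι → ℤ}

lemma mem_sum_finset {C : ι → Finset ℤ} {x : ℤ} :
    x ∈ ∑ j ∈ I, C j ↔ ∃ f : ι → ℤ, (∀ j ∈ I, f j ∈ C j) ∧ ∑ j ∈ I, f j = x := by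
  rw [← Finset.mem_coe, Finset.coe_sum, Set.mem_finsetSum]
  simp

lemma mem_dilSum {B : ι → Finset ℤ} {x : ℤ} :
    x ∈ dilSum I l B ↔ ∃ f : ι → ℤ, (∀ j ∈ I, f j ∈ B j) ∧ ∑ j ∈ I, l j * f j = x := by
  rw [dilSum, mem_sum_finset]
  constructor
  · rintro ⟨f, hf, rfl⟩
    have h : ∀ j, ∃ a, j ∈ I → a ∈ B j ∧ l j * a = f j := by
      intro j
      by_cases hj : j ∈ I
      · obtain ⟨a, ha⟩ := Finset.mem_image.1 (hf j hj)
        exact ⟨a, fun _ => ha⟩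
      · exact ⟨0, fun h => absurd h hj⟩
    choose g hg using h
    exact ⟨g, fun j hj => (hg j hj).1, Finset.sum_congr rfl fun j hj => (hg j hj).2⟩
  · rintro ⟨f, hf, rfl⟩
    exact ⟨fun j => l j * f j, fun j hj => Finset.mem_image_of_mem _ (hf j hj), rfl⟩

lemma dilSum_mono {B C : ι → Finset ℤ} (h : ∀ j ∈ I, B j ⊆ C j) :
    dilSum I l B ⊆ dilSum I l C := by
  intro x hx
  obtain ⟨f, hf, rfl⟩ := mem_dilSum.1 hx
  exact mem_dilSum.2 ⟨f, fun j hj => h j hj (hf j hj), rfl⟩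

lemma card_dilSum_affine {t b : ℤ} (ht : t ≠ 0) (A : Finset ℤ) :
    (dilSum I l (fun _ => A.image (fun a => t * a + b))).card = (dilSum I l (fun _ => A)).card := by
  have h : dilSum I l (fun _ => A.image (fun a => t * a + b)) =
      (dilSum I l (fun _ => A)).image (fun x => t * x + b * ∑ j ∈ I, l j) := by
    ext x
    simp only [mem_dilSum, Finset.mem_image]
    constructor
    · rintro ⟨f, hf, rfl⟩
      have h : ∀ j, ∃ a, j ∈ I → a ∈ A ∧ t * a + b = f j := by
        intro j
        by_cases hj : j ∈ I
        · obtain ⟨a, ha⟩ := hf j hj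
          exact ⟨a, fun _ => ha⟩
        · exact ⟨0, fun h => absurd h hj⟩
      choose g hg using h
      refine ⟨_, ⟨g, fun j hj => (hg j hj).1, rfl⟩, ?_⟩
      rw [Finset.mul_sum, Finset.mul_sum, ← Finset.sum_add_distrib]
      refine Finset.sum_congr rfl fun j hj => ?_
      rw [← (hg j hj).2]; ring
    · rintro ⟨_, ⟨g, hg, rfl⟩, rfl⟩
      refine ⟨fun j => t * g j + b, fun j hj => ⟨g j, hg j hj, rfl⟩, ?_⟩
      rw [Finset.mul_sum, Finset.mul_sum, ← Finset.sum_add_distrib]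
      exact Finset.sum_congr rfl fun j hj => by ring
  rw [h, Finset.card_image_of_injective]
  intro x y hxy
  simpa [ht] using hxy

lemma card_le_card_dilSum [DecidableEq ι] {B : ι → Finset ℤ} {i : ι} (hi : i ∈ I) (hl : l i ≠ 0)
    (hB : ∀ j ∈ I, (B j).Nonempty) : (B i).card ≤ (dilSum I l B).card := by
  have h : ∀ j, ∃ a, j ∈ I → a ∈ B j := by
    intro j
    by_cases hj : j ∈ I
    · obtain ⟨a, ha⟩ := hB j hj
      exact ⟨a, fun _ => ha⟩
    · exact ⟨0, fun h => absurd h hj⟩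
  choose g hg using h
  refine Finset.card_le_card_of_injOn (fun a => ∑ j ∈ I, l j * Function.update g i a j) ?_ ?_
  · intro a ha
    refine mem_dilSum.2 ⟨_, fun j hj => ?_, rfl⟩
    by_cases hji : j = i
    · subst hji; simpa using ha
    · simpa [hji] using hg j hj
  · intro a _ b _ hab
    have key : ∀ a, ∑ j ∈ I, l j * Function.update g i a j
        = l i * a + ∑ j ∈ I.erase i, l j * g j := by
      intro a
      rw [← Finset.add_sum_erase _ _ hi]
      congr 1
      · simp
      · refine Finset.sum_congr rfl fun j hj => ?_
        simp [Finset.ne_of_mem_erase hj]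
    simp only [key] at hab
    have : l i * a = l i * b := by linarith
    exact mul_left_cancel₀ hl this

end Basic

/-! ### Superadditivity of sumset sizes -/

section Superadditivity

variable {ι : Type*} [LinearOrder ι]

/-- Replacing the lower endpoints `lo j` by the upper endpoints `hi j` one index at a time, the
running sums `P i` sweep out intervals `(P i, P i - lo i + hi i]` covering `(∑ lo, ∑ hi]`. -/
lemma exists_step (lo hi : ι → ℤ) (I : Finset ι) :
    ∀ s : ℤ, ∑ j ∈ I, lo j < s → s ≤ ∑ j ∈ I, hi j → ∃ i ∈ I,
      ∑ j ∈ I, (if j < i then hi j else lo j) < s ∧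
      s ≤ ∑ j ∈ I, (if j < i then hi j else lo j) - lo i + hi i := by
  induction I using Finset.induction_on_max with
  | empty => intro s h1 h2; simp at h1 h2; omega
  | insert a I ha ih =>
    intro s h1 h2
    have haI : a ∉ I := fun h => lt_irrefl _ (ha a h)
    rw [Finset.sum_insert haI] at h1 h2
    have hlast : ∑ j ∈ insert a I, (if j < a then hi j else lo j) = lo a + ∑ j ∈ I, hi j := by
      rw [Finset.sum_insert haI, if_neg (lt_irrefl _)]
      congr 1
      exact Finset.sum_congr rfl fun j hj => if_pos (ha j hj)
    by_cases hs : lo a + ∑ j ∈ I, hi j < s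
    · refine ⟨a, Finset.mem_insert_self _ _, ?_, ?_⟩ <;> rw [hlast] <;> linarith
    · obtain ⟨i, hi', h3, h4⟩ := ih (s - lo a) (by linarith) (by linarith)
      have : ∑ j ∈ insert a I, (if j < i then hi j else lo j)
          = lo a + ∑ j ∈ I, (if j < i then hi j else lo j) := by
        rw [Finset.sum_insert haI, if_neg (not_lt.2 (ha i hi').le)]
      refine ⟨i, Finset.mem_insert_of_mem hi', ?_, ?_⟩ <;> rw [this] <;> linarith

/-- Superadditivity of sumset sizes (Gyarmati, Matolcsi and Ruzsa; Lev). The sumset omitting `C i`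
is embedded into the full sumset, avoiding the `i`-th interval of `exists_step`: small elements are
shifted by `min (C i)` and large ones by `max (C i)`. These intervals cover all of the sumset but
its least element. -/
lemma sum_card_erase_le (I : Finset ι) (C : ι → Finset ℤ)
    (hC : ∀ j ∈ I, (C j).Nonempty) :
    ∑ i ∈ I, (∑ j ∈ I.erase i, C j).card + (∑ j ∈ I, C j).card
      ≤ I.card * (∑ j ∈ I, C j).card + 1 := by
  classical
  have hex : ∀ j, ∃ p : ℤ × ℤ, j ∈ I → p.1 ∈ C j ∧ p.2 ∈ C j ∧ ∀ x ∈ C j, p.1 ≤ x ∧ x ≤ p.2 := by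
    intro j
    by_cases hj : j ∈ I
    · exact ⟨((C j).min' (hC j hj), (C j).max' (hC j hj)), fun _ =>
        ⟨Finset.min'_mem _ (hC j hj), Finset.max'_mem _ (hC j hj), fun x hx =>
          ⟨Finset.min'_le _ _ hx, Finset.le_max' _ _ hx⟩⟩⟩
    · exact ⟨0, fun h => absurd h hj⟩
  choose p hp using hex
  set lo : ι → ℤ := fun j => (p j).1 with hlo
  set hi : ι → ℤ := fun j => (p j).2 with hhi
  set S := ∑ j ∈ I, C j with hS
  set P : ι → ℤ := fun i => ∑ j ∈ I, (if j < i then hi j else lo j) with hP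
  have hle : ∀ j ∈ I, lo j ≤ hi j := fun j hj => ((hp j hj).2.2 _ (hp j hj).1).2
  have hsub : ∀ i ∈ I, ∀ x ∈ ∑ j ∈ I.erase i, C j, ∀ c ∈ C i, x + c ∈ S := by
    intro i hi x hx c hc
    rw [hS, ← Finset.add_sum_erase _ _ hi, add_comm x c]
    exact Finset.add_mem_add hc hx
  -- each smaller sumset embeds into the part of `S` outside the `i`-th interval
  have h1 : ∀ i ∈ I, (∑ j ∈ I.erase i, C j).card
      + (S.filter (fun s => P i < s ∧ s ≤ P i - lo i + hi i)).card ≤ S.card := by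
    intro i hi'
    rw [add_comm, ← Finset.card_filter_add_card_filter_not (s := S)
      (fun s => P i < s ∧ s ≤ P i - lo i + hi i)]
    refine Nat.add_le_add_left ?_ _
    refine Finset.card_le_card_of_injOn
      (fun x => if x + lo i ≤ P i then x + lo i else x + hi i) ?_ ?_
    · intro x hx
      simp only [Finset.coe_filter, Set.mem_ofPred_eq]
      split_ifs with h
      · exact ⟨hsub i hi' x hx _ (hp i hi').1, fun h' => absurd h'.1 (not_lt.2 h)⟩
      · refine ⟨hsub i hi' x hx _ (hp i hi').2.1, fun h' => ?_⟩
        linarith [h'.2]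
    · intro x _ y _ hxy
      have := hle i hi'
      simp only at hxy
      split_ifs at hxy <;> linarith
  have h2 : S.card ≤ ∑ i ∈ I, (S.filter (fun s => P i < s ∧ s ≤ P i - lo i + hi i)).card + 1 := by
    have hcov : S ⊆ insert (∑ j ∈ I, lo j)
        (I.biUnion fun i => S.filter (fun s => P i < s ∧ s ≤ P i - lo i + hi i)) := by
      intro s hs
      obtain ⟨f, hf, rfl⟩ := mem_sum_finset.1 hs
      rw [Finset.mem_insert]
      by_cases h : ∑ j ∈ I, f j = ∑ j ∈ I, lo j
      · exact Or.inl h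
      · right
        have h3 : ∑ j ∈ I, lo j ≤ ∑ j ∈ I, f j :=
          Finset.sum_le_sum fun j hj => ((hp j hj).2.2 _ (hf j hj)).1
        have h4 : ∑ j ∈ I, f j ≤ ∑ j ∈ I, hi j :=
          Finset.sum_le_sum fun j hj => ((hp j hj).2.2 _ (hf j hj)).2
        obtain ⟨i, hi', h5, h6⟩ := exists_step lo hi I _ (lt_of_le_of_ne h3 (Ne.symm h)) h4
        exact Finset.mem_biUnion.2 ⟨i, hi', Finset.mem_filter.2 ⟨hs, h5, h6⟩⟩
    refine (Finset.card_le_card hcov).trans ((Finset.card_insert_le _ _).trans ?_)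
    gcongr
    exact Finset.card_biUnion_le
  have h3 := Finset.sum_le_sum h1
  rw [Finset.sum_add_distrib, Finset.sum_const, smul_eq_mul] at h3
  omega

end Superadditivity

/-! ### Full distribution and gains -/

/-- `A` is fully distributed modulo `m`: it meets every residue class modulo `m`. -/
def FullyDist (m : ℕ) (A : Finset ℤ) : Prop := ∀ x : ℤ, ∃ a ∈ A, (m : ℤ) ∣ a - x

/-- The divisibility facts about coefficients `l` on an index set `I` of size at least two with
overall gcd one, where `d i` is the gcd of the `l j` with `j ≠ i`. -/
structure DilateData {ι : Type*} (I : Finset ι) (l : ι → ℤ) (d : ι → ℕ) : Prop where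
  ne_zero : ∀ i ∈ I, l i ≠ 0
  exists_ne : ∀ i ∈ I, ∃ j ∈ I, j ≠ i
  pos : ∀ i ∈ I, 0 < d i
  dvd : ∀ i ∈ I, ∀ j ∈ I, j ≠ i → (d i : ℤ) ∣ l j
  coprime : ∀ i ∈ I, IsCoprime (d i : ℤ) (l i)
  gcd_eq : ∀ i ∈ I, ∀ g x : ℤ, (∀ j ∈ I, j ≠ i → g * d i ∣ l j * x) → g ∣ x

section Gain

variable {ι : Type*} [DecidableEq ι] {I : Finset ι} {l : ι → ℤ} {d : ι → ℕ}

/-- The sum of dilates of `A` in which the `i`-th summand only uses `X`. -/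
def resSum (I : Finset ι) (l : ι → ℤ) (i : ι) (X A : Finset ℤ) : Finset ℤ :=
  dilSum I l (fun j => if j = i then X else A)

lemma FullyDist.of_affine {m : ℕ} {t b : ℤ} {A : Finset ℤ}
    (h : FullyDist m (A.image (fun a => t * a + b))) : FullyDist m A := by
  have hcop : IsCoprime (m : ℤ) t := by
    obtain ⟨a, ha, h1⟩ := h (b + 1)
    obtain ⟨a', -, rfl⟩ := Finset.mem_image.1 ha
    obtain ⟨q, hq⟩ := h1
    exact ⟨-q, a', by linarith⟩
  intro x
  obtain ⟨a, ha, h1⟩ := h (t * x + b)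
  obtain ⟨a', ha', rfl⟩ := Finset.mem_image.1 ha
  refine ⟨a', ha', hcop.dvd_of_dvd_mul_left ?_⟩
  refine h1.trans (dvd_of_eq ?_)
  ring

/-- Since `d i` divides every coefficient except the `i`-th, to which it is coprime, a sum of
dilates determines its `i`-th entry modulo `d i`. -/
lemma DilateData.dvd_entry_sub (hd : DilateData I l d) {i : ι} (hi : i ∈ I) {f g : ι → ℤ}
    (h : ∑ j ∈ I, l j * f j = ∑ j ∈ I, l j * g j) : (d i : ℤ) ∣ f i - g i := by
  refine (hd.coprime i hi).dvd_of_dvd_mul_left ?_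
  rw [← Finset.add_sum_erase _ _ hi, ← Finset.add_sum_erase I (fun j => l j * g j) hi] at h
  have h1 : l i * (f i - g i) = ∑ j ∈ I.erase i, l j * (g j - f j) := by
    simp only [mul_sub, Finset.sum_sub_distrib]
    linarith
  rw [h1]
  exact Finset.dvd_sum fun j hj =>
    (hd.dvd i hi j (Finset.mem_of_mem_erase hj) (Finset.ne_of_mem_erase hj)).mul_right _

lemma DilateData.disjoint_resSum (hd : DilateData I l d) {i : ι} (hi : i ∈ I) {X Y A : Finset ℤ}
    (h : ∀ x ∈ X, ∀ y ∈ Y, ¬ (d i : ℤ) ∣ x - y) :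
    Disjoint (resSum I l i X A) (resSum I l i Y A) := by
  rw [Finset.disjoint_left]
  intro s hs hs'
  obtain ⟨f, hf, rfl⟩ := mem_dilSum.1 hs
  obtain ⟨g, hg, hgf⟩ := mem_dilSum.1 hs'
  exact h (f i) (by simpa using hf i hi) (g i) (by simpa using hg i hi)
    (hd.dvd_entry_sub hi hgf.symm)

lemma resSum_subset {i : ι} {X A : Finset ℤ} (h : X ⊆ A) :
    resSum I l i X A ⊆ dilSum I l (fun _ => A) := by
  refine dilSum_mono fun j _ => ?_
  split_ifs
  · exact h
  · exact subset_rfl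

lemma dilSum_subset_resSum {i : ι} {X A : Finset ℤ} (h : X ⊆ A) :
    dilSum I l (fun _ => X) ⊆ resSum I l i X A := by
  refine dilSum_mono fun j _ => ?_
  split_ifs
  · exact subset_rfl
  · exact h

/-- Gain from losing full distribution: if `A` meets a class modulo `d j` that `X` misses, then
putting a point of that class in the `j`-th summand yields a translate of `l i · X` outside the
sum of dilates of `X`. -/
lemma DilateData.gain_of_lost (hd : DilateData I l d) {i j : ι} (hi : i ∈ I) (hj : j ∈ I)
    (hji : j ≠ i) {X A : Finset ℤ} (hXA : X ⊆ A) (hX : X.Nonempty)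
    (hA : FullyDist (d j) A) (hnX : ¬ FullyDist (d j) X) :
    (dilSum I l (fun _ => X)).card + X.card ≤ (resSum I l i X A).card := by
  obtain ⟨a₀, ha₀⟩ := hX
  obtain ⟨x, hx⟩ := not_forall.1 hnX
  push Not at hx
  obtain ⟨a, ha, hax⟩ := hA x
  set B : ι → Finset ℤ := fun m => if m = i then X else if m = j then {a} else {a₀} with hB
  have hBi : B i = X := by simp [hB]
  have hne : ∀ m ∈ I, (B m).Nonempty := by
    intro m _
    simp only [hB]
    split_ifs
    · exact ⟨a₀, ha₀⟩
    · simp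
    · simp
  have h1 : X.card ≤ (dilSum I l B).card :=
    hBi ▸ card_le_card_dilSum hi (hd.ne_zero i hi) hne
  have hdisj : Disjoint (dilSum I l (fun _ => X)) (dilSum I l B) := by
    rw [Finset.disjoint_left]
    intro s hs hs'
    obtain ⟨f, hf, rfl⟩ := mem_dilSum.1 hs
    obtain ⟨g, hg, hgf⟩ := mem_dilSum.1 hs'
    have hgj : g j = a := by simpa [hB, hji] using hg j hj
    have h2 := hd.dvd_entry_sub hj hgf.symm
    rw [hgj] at h2
    refine hx (f j) (hf j hj) ?_
    have := dvd_add h2 hax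
    simpa using this
  have hsub : dilSum I l B ⊆ resSum I l i X A := by
    refine dilSum_mono fun m _ => ?_
    simp only [hB]
    split_ifs
    · exact subset_rfl
    · simpa using ha
    · simpa using hXA ha₀
  calc _ ≤ (dilSum I l (fun _ => X)).card + (dilSum I l B).card := by gcongr
    _ = (dilSum I l (fun _ => X) ∪ dilSum I l B).card := (Finset.card_union_of_disjoint hdisj).symm
    _ ≤ _ := Finset.card_le_card (Finset.union_subset (dilSum_subset_resSum hXA) hsub)

/-- A nonempty finite set `X` whose dilate `c · X`, with `c` coprime to `m`, is closed modulo `m`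
under adding elements of a set `G` meets all residue classes modulo `m`, provided only units divide
all of `G`: the increments under which `c · X` is closed modulo `m` form a subgroup of `ℤ`. -/
lemma fullyDist_of_closed {m : ℕ} (hm : 0 < m) {c : ℤ} (hc : IsCoprime (m : ℤ) c) {X : Finset ℤ}
    (hX : X.Nonempty) (G : Set ℤ) (hG : ∀ g : ℤ, (∀ h ∈ G, g ∣ h) → IsUnit g)
    (hcl : ∀ h ∈ G, ∀ x ∈ X, ∃ y ∈ X, (m : ℤ) ∣ c * x + h - c * y) : FullyDist m X := by
  let M : AddSubmonoid ℤ :=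
    { carrier := {h | ∀ x ∈ X, ∃ y ∈ X, (m : ℤ) ∣ c * x + h - c * y}
      zero_mem' := fun x hx => ⟨x, hx, by simp⟩
      add_mem' := by
        intro h k hh hk x hx
        obtain ⟨y, hy, h1⟩ := hh x hx
        obtain ⟨z, hz, h2⟩ := hk y hy
        refine ⟨z, hz, ?_⟩
        have := dvd_add h1 h2
        refine this.trans (dvd_of_eq ?_)
        ring }
  have hmod : ∀ h ∈ M, ∀ k : ℤ, (m : ℤ) ∣ k - h → k ∈ M := by
    intro h hh k hk x hx
    obtain ⟨y, hy, h1⟩ := hh x hx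
    refine ⟨y, hy, ?_⟩
    have := dvd_add h1 hk
    refine this.trans (dvd_of_eq ?_)
    ring
  let H : AddSubgroup ℤ :=
    { M with
      neg_mem' := by
        intro h hh
        refine hmod ((m - 1) • h) (M.nsmul_mem hh _) _ ?_
        refine ⟨-h, ?_⟩
        rw [nsmul_eq_mul, Nat.cast_sub hm]
        push_cast
        ring }
  obtain ⟨g, hg⟩ := Int.subgroup_cyclic H
  rw [← AddSubgroup.zmultiples_eq_closure] at hg
  have hunit : IsUnit g := by
    refine hG g fun h hh => ?_
    have : h ∈ H := hcl h hh
    rw [hg, Int.mem_zmultiples_iff] at this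
    exact this
  have hall : ∀ h : ℤ, h ∈ H := by
    intro h
    rw [hg, Int.mem_zmultiples_iff]
    exact hunit.dvd
  intro x
  obtain ⟨a₀, ha₀⟩ := hX
  obtain ⟨y, hy, h1⟩ := hall (c * (x - a₀)) a₀ ha₀
  refine ⟨y, hy, hc.dvd_of_dvd_mul_left ?_⟩
  rw [← dvd_neg]
  refine h1.trans (dvd_of_eq ?_)
  ring

/-- Gain from a class that is not fully distributed after rescaling: if `r + d i · X` is a class
of the primitive set `A` modulo `d i` and `X` misses a class modulo `d i`, then replacing a summand
by some class `A_b` of `A` modulo `d i` produces a new residue class modulo `(d i)²`, hence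
`|A_b|` new elements. -/
lemma DilateData.gain_of_not_fullyDist (hd : DilateData I l d) {i : ι} (hi : i ∈ I)
    {X A : Finset ℤ} {r : ℤ} (hXA : X.image (fun a => (d i : ℤ) * a + r) ⊆ A) (hX : X.Nonempty)
    (hprim : ∀ g : ℤ, (∀ a ∈ A, ∀ b ∈ A, g ∣ a - b) → IsUnit g)
    (hnX : ¬ FullyDist (d i) X) :
    ∃ b ∈ A, (dilSum I l (fun _ => X.image (fun a => (d i : ℤ) * a + r))).card
        + (A.filter (fun a => (d i : ℤ) ∣ a - b)).card
      ≤ (resSum I l i (X.image (fun a => (d i : ℤ) * a + r)) A).card := by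
  obtain ⟨x₀, hx₀⟩ := hX
  have hpos : (d i : ℤ) ≠ 0 := by exact_mod_cast (hd.pos i hi).ne'
  have ha₀ : (d i : ℤ) * x₀ + r ∈ X.image (fun a => (d i : ℤ) * a + r) :=
    Finset.mem_image_of_mem _ hx₀
  set a₀ := (d i : ℤ) * x₀ + r with ha₀def
  -- some increment `l j * (b - a₀) / d i` leads out of the classes met by `l i · X`
  have hnew : ∃ j ∈ I, j ≠ i ∧ ∃ b ∈ A, ∃ x ∈ X, ∀ y ∈ X,
      ¬ (d i : ℤ) * d i ∣ d i * (l i * (x - y)) + l j * (b - a₀) := by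
    by_contra hcon
    push Not at hcon
    refine hnX (fullyDist_of_closed (hd.pos i hi) (hd.coprime i hi) ⟨x₀, hx₀⟩
      {h | ∃ j ∈ I, j ≠ i ∧ ∃ b ∈ A, d i * h = l j * (b - a₀)} ?_ ?_)
    · intro g hg
      have h1 : ∀ b ∈ A, g ∣ b - a₀ := by
        intro b hb
        refine hd.gcd_eq i hi g (b - a₀) fun j hj hji => ?_
        obtain ⟨q, hq⟩ := hd.dvd i hi j hj hji
        rw [hq, mul_comm, mul_assoc]
        exact mul_dvd_mul_left _ (hg _ ⟨j, hj, hji, b, hb, by rw [hq]; ring⟩)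
      refine hprim g fun a ha b hb => ?_
      have := dvd_sub (h1 a ha) (h1 b hb)
      simpa using this
    · rintro h ⟨j, hj, hji, b, hb, hh⟩ x hx
      obtain ⟨y, hy, h1⟩ := hcon j hj hji b hb x hx
      refine ⟨y, hy, ?_⟩
      rw [← hh, ← mul_add] at h1
      have := (mul_dvd_mul_iff_left hpos).1 h1
      refine this.trans (dvd_of_eq ?_)
      ring
  obtain ⟨j, hj, hji, b, hb, x, hx, hxy⟩ := hnew
  refine ⟨b, hb, ?_⟩
  set Y := X.image (fun a => (d i : ℤ) * a + r) with hY
  set Ab := A.filter (fun a => (d i : ℤ) ∣ a - b) with hAb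
  have hbAb : b ∈ Ab := by simp [hAb, hb]
  have hxY : (d i : ℤ) * x + r ∈ Y := Finset.mem_image_of_mem _ hx
  set B : ι → Finset ℤ :=
    fun m => if m = i then {(d i : ℤ) * x + r} else if m = j then Ab else {a₀} with hB
  have hBj : B j = Ab := by simp [hB, hji]
  have hne : ∀ m ∈ I, (B m).Nonempty := by
    intro m _
    simp only [hB]
    split_ifs
    · simp
    · exact ⟨b, hbAb⟩
    · simp
  have h1 : Ab.card ≤ (dilSum I l B).card :=
    hBj ▸ card_le_card_dilSum hj (hd.ne_zero j hj) hne
  have hdisj : Disjoint (dilSum I l (fun _ => Y)) (dilSum I l B) := by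
    rw [Finset.disjoint_left]
    intro s hs hs'
    obtain ⟨f, hf, rfl⟩ := mem_dilSum.1 hs
    obtain ⟨g, hg, hgf⟩ := mem_dilSum.1 hs'
    obtain ⟨y, hy, hfi⟩ := Finset.mem_image.1 (hf i hi)
    have hgi : g i = (d i : ℤ) * x + r := by simpa [hB] using hg i hi
    have hgj : g j ∈ Ab := by simpa [hB, hji] using hg j hj
    have hfd : ∀ m ∈ I, (d i : ℤ) ∣ f m - a₀ := by
      intro m hm
      obtain ⟨z, -, hz⟩ := Finset.mem_image.1 (hf m hm)
      exact ⟨z - x₀, by rw [← hz, ha₀def]; ring⟩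
    refine hxy y hy ?_
    have hjE : j ∈ I.erase i := Finset.mem_erase.2 ⟨hji, hj⟩
    rw [← Finset.add_sum_erase _ _ hi, ← Finset.add_sum_erase I (fun j => l j * f j) hi,
      ← Finset.add_sum_erase _ _ hjE, ← Finset.add_sum_erase _ (fun j => l j * f j) hjE,
      hgi, ← hfi] at hgf
    have h2 : (d i : ℤ) * (l i * (x - y)) + l j * (b - a₀)
        = l j * ((f j - a₀) - (g j - b)) + ∑ m ∈ (I.erase i).erase j, l m * (f m - g m) := by
      simp only [mul_sub, Finset.sum_sub_distrib]
      linear_combination hgf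
    rw [h2]
    refine dvd_add (mul_dvd_mul (hd.dvd i hi j hj hji)
      (dvd_sub (hfd j hj) (Finset.mem_filter.1 hgj).2)) (Finset.dvd_sum fun m hm => ?_)
    have hmj := Finset.ne_of_mem_erase hm
    have hmi := Finset.ne_of_mem_erase (Finset.mem_of_mem_erase hm)
    have hmI := Finset.mem_of_mem_erase (Finset.mem_of_mem_erase hm)
    have hgm : g m = a₀ := by simpa [hB, hmi, hmj] using hg m hmI
    rw [hgm]
    exact mul_dvd_mul (hd.dvd i hi m hmI hmi) (hfd m hmI)
  have hsub : dilSum I l B ⊆ resSum I l i Y A := by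
    refine dilSum_mono fun m _ => ?_
    simp only [hB]
    split_ifs
    · simpa using hxY
    · exact Finset.filter_subset _ _
    · simpa using hXA ha₀
  calc _ ≤ (dilSum I l (fun _ => Y)).card + (dilSum I l B).card := by gcongr
    _ = (dilSum I l (fun _ => Y) ∪ dilSum I l B).card := (Finset.card_union_of_disjoint hdisj).symm
    _ ≤ _ := Finset.card_le_card (Finset.union_subset (dilSum_subset_resSum hXA) hsub)

end Gain

/-! ### Sets fully distributed in every direction -/

section FullyDistributed

variable {ι : Type*} [LinearOrder ι] {I : Finset ι} {l : ι → ℤ} {d : ι → ℕ}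

/-- If `A` is fully distributed modulo every `d i`, then splitting the `i`-th summand by residues
modulo `d i`, for all `i` simultaneously, cuts the sum of dilates into `∏ d i` disjoint sumsets of
nonempty sets, and superadditivity applies to each of them. -/
lemma DilateData.sum_mul_card_le (hd : DilateData I l d) {A : Finset ℤ}
    (hA : ∀ i ∈ I, FullyDist (d i) A) (hI : 1 ≤ I.card) :
    ∑ i ∈ I, d i * (dilSum (I.erase i) l (fun _ => A)).card + (dilSum I l (fun _ => A)).card
      ≤ I.card * (dilSum I l (fun _ => A)).card + ∏ i ∈ I, d i := by
  classical
  set U := I.pi (fun i => Finset.range (d i)) with hU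
  let e : (∀ i ∈ I, ℕ) → ι → ℤ := fun u j => if h : j ∈ I then (u j h : ℤ) else 0
  have he : ∀ u, ∀ j, ∀ h : j ∈ I, e u j = u j h := fun u j h => dif_pos h
  let B : (∀ i ∈ I, ℕ) → ι → Finset ℤ := fun u j => A.filter (fun a => (d j : ℤ) ∣ a - e u j)
  have hne : ∀ u, ∀ j ∈ I, ((B u j).image (fun a => l j * a)).Nonempty := by
    intro u j hj
    obtain ⟨a, ha, h⟩ := hA j hj (e u j)
    exact ⟨l j * a, Finset.mem_image_of_mem _ (Finset.mem_filter.2 ⟨ha, h⟩)⟩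
  have hUcard : U.card = ∏ i ∈ I, d i := by simp [hU]
  have h1 : ∑ u ∈ U, (∑ i ∈ I, (dilSum (I.erase i) l (B u)).card + (dilSum I l (B u)).card)
      ≤ ∑ u ∈ U, (I.card * (dilSum I l (B u)).card + 1) :=
    Finset.sum_le_sum fun u _ => sum_card_erase_le I _ (hne u)
  rw [Finset.sum_add_distrib, Finset.sum_add_distrib, ← Finset.mul_sum, Finset.sum_comm] at h1
  have h2 : ∑ u ∈ U, (dilSum I l (B u)).card ≤ (dilSum I l (fun _ => A)).card := by
    rw [← Finset.card_biUnion]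
    · refine Finset.card_le_card (Finset.biUnion_subset.2 fun u _ => ?_)
      exact dilSum_mono fun j _ => Finset.filter_subset _ _
    · intro u hu v hv huv
      rw [Function.onFun_apply, Finset.disjoint_left]
      intro s hs hs'
      obtain ⟨f, hf, rfl⟩ := mem_dilSum.1 hs
      obtain ⟨g, hg, hgf⟩ := mem_dilSum.1 hs'
      refine huv (funext fun j => funext fun hj => ?_)
      have h3 := hd.dvd_entry_sub hj hgf.symm
      have h4 := (Finset.mem_filter.1 (hf j hj)).2
      have h5 := (Finset.mem_filter.1 (hg j hj)).2
      rw [he _ _ hj] at h4 h5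
      have h6 : (d j : ℤ) ∣ (u j hj : ℤ) - v j hj := by
        refine (dvd_sub (dvd_add h3 h5) h4).trans (dvd_of_eq ?_)
        ring
      have hu' := Finset.mem_range.1 (Finset.mem_pi.1 hu j hj)
      have hv' := Finset.mem_range.1 (Finset.mem_pi.1 hv j hj)
      have h7 := Int.eq_zero_of_abs_lt_dvd h6 (by rw [abs_lt]; constructor <;> omega)
      omega
  have h3 : ∀ i ∈ I, d i * (dilSum (I.erase i) l (fun _ => A)).card
      ≤ ∑ u ∈ U, (dilSum (I.erase i) l (B u)).card := by
    intro i hi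
    rw [← Finset.sum_fiberwise_of_maps_to (s := U) (t := Finset.range (d i)) (g := fun u => u i hi)
      (fun u hu => Finset.mem_pi.1 hu i hi)]
    have h4 : ∀ x ∈ Finset.range (d i), (dilSum (I.erase i) l (fun _ => A)).card
        ≤ ∑ u ∈ U with u i hi = x, (dilSum (I.erase i) l (B u)).card := by
      intro x hx
      refine le_trans (Finset.card_le_card ?_) Finset.card_biUnion_le
      intro s hs
      obtain ⟨f, hf, rfl⟩ := mem_dilSum.1 hs
      refine Finset.mem_biUnion.2
        ⟨fun j _ => if j = i then x else (f j % d j).toNat, ?_, mem_dilSum.2 ⟨f, ?_, rfl⟩⟩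
      · refine Finset.mem_filter.2 ⟨Finset.mem_pi.2 fun j hj => ?_, by simp⟩
        have hpos := hd.pos j hj
        split_ifs with hji
        · subst hji; exact hx
        · have := Int.emod_lt_of_pos (f j) (Int.natCast_pos.2 hpos)
          rw [Finset.mem_range]
          omega
      · intro j hj
        have hjI := Finset.mem_of_mem_erase hj
        refine Finset.mem_filter.2 ⟨hf j hj, ?_⟩
        have h5 := he (fun j _ => if j = i then x else (f j % d j).toNat) j hjI
        rw [if_neg (Finset.ne_of_mem_erase hj), Int.toNat_of_nonneg
          (Int.emod_nonneg _ (by exact_mod_cast (hd.pos j hjI).ne'))] at h5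
        exact Int.dvd_self_sub_emod.trans (dvd_of_eq (congrArg (f j - ·) h5.symm))
    have h5 := Finset.sum_le_sum h4
    rwa [Finset.sum_const, Finset.card_range, smul_eq_mul] at h5
  have h4 := Finset.sum_le_sum h3
  rw [Finset.sum_const, smul_eq_mul, mul_one, hUcard] at h1
  obtain ⟨n, hn⟩ : ∃ n, I.card = n + 1 := ⟨I.card - 1, by omega⟩
  rw [hn] at h1 ⊢
  nlinarith [Nat.mul_le_mul_left n h2]

end FullyDistributed

/-! ### Improving the slope -/

section Improve

open Classical in
/-- The product of those moduli `d i` for which `A` is not fully distributed modulo `d i`. -/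
noncomputable def badProd {ι : Type*} (I : Finset ι) (d : ι → ℕ) (A : Finset ℤ) : ℕ :=
  ∏ i ∈ I with ¬ FullyDist (d i) A, d i

variable {ι : Type*} {I : Finset ι} {l : ι → ℤ} {d : ι → ℕ}

lemma badProd_mono (hpos : ∀ i ∈ I, 0 < d i) {A B : Finset ℤ}
    (h : ∀ i ∈ I, FullyDist (d i) A → FullyDist (d i) B) : badProd I d B ≤ badProd I d A := by
  classical
  refine Finset.prod_le_prod_of_subset_of_one_le' ?_ ?_
  · intro i hi
    rw [Finset.mem_filter] at hi ⊢
    exact ⟨hi.1, fun h' => hi.2 (h i hi.1 h')⟩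
  · intro i hi _
    exact hpos i (Finset.mem_filter.1 hi).1

lemma one_le_badProd (hpos : ∀ i ∈ I, 0 < d i) (A : Finset ℤ) : 1 ≤ badProd I d A := by
  classical
  refine Finset.one_le_prod' fun i hi => ?_
  exact hpos i (Finset.mem_filter.1 hi).1

variable [DecidableEq ι]

/-- Sets that meet all classes modulo `d i`, and modulo every other `d j` modulo which `A` does,
have a `badProd` smaller than that of `A` by at least a factor `d i`. -/
lemma exists_badProd_eq_mul (hpos : ∀ i ∈ I, 0 < d i) {A : Finset ℤ} {i : ι} (hi : i ∈ I)
    (hA : ¬ FullyDist (d i) A) :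
    ∃ N' : ℕ, 1 ≤ N' ∧ badProd I d A = d i * N' ∧ ∀ B : Finset ℤ, FullyDist (d i) B →
      (∀ j ∈ I, j ≠ i → FullyDist (d j) A → FullyDist (d j) B) → badProd I d B ≤ N' := by
  classical
  refine ⟨∏ j ∈ (I.filter (fun i => ¬ FullyDist (d i) A)).erase i, d j, ?_, ?_, ?_⟩
  · exact Finset.one_le_prod' fun j hj =>
      hpos j (Finset.mem_filter.1 (Finset.mem_of_mem_erase hj)).1
  · rw [badProd, Finset.mul_prod_erase]
    exact Finset.mem_filter.2 ⟨hi, hA⟩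
  · intro B hBi hB
    refine Finset.prod_le_prod_of_subset_of_one_le' ?_ ?_
    · intro j hj
      rw [Finset.mem_filter] at hj
      have hji : j ≠ i := fun h => hj.2 (h ▸ hBi)
      rw [Finset.mem_erase, Finset.mem_filter]
      exact ⟨hji, hj.1, fun h' => hj.2 (hB j hj.1 hji h')⟩
    · intro j hj _
      exact hpos j (Finset.mem_filter.1 (Finset.mem_of_mem_erase hj)).1

lemma exists_primitive {A : Finset ℤ} (hA : 2 ≤ A.card) :
    ∃ t b : ℤ, t ≠ 0 ∧ ∃ B : Finset ℤ, A = B.image (fun a => t * a + b) ∧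
      ∀ g : ℤ, (∀ a ∈ B, ∀ b ∈ B, g ∣ a - b) → IsUnit g := by
  obtain ⟨b, hb, b', hb', hne⟩ := Finset.one_lt_card.1 hA
  set t := A.gcd (fun a => a - b) with ht
  have htd : ∀ a ∈ A, t ∣ a - b := fun a ha => Finset.gcd_dvd ha
  have ht0 : t ≠ 0 := by
    intro h0
    have := htd b' hb'
    rw [h0, zero_dvd_iff] at this
    omega
  have hAB : A = (A.image (fun a => (a - b) / t)).image (fun a => t * a + b) := by
    rw [Finset.image_image]
    conv_lhs => rw [← Finset.image_id (s := A)]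
    refine Finset.image_congr fun a ha => ?_
    simp only [id, Function.comp]
    rw [Int.mul_ediv_cancel' (htd a ha)]
    ring
  refine ⟨t, b, ht0, _, hAB, fun g hg => ?_⟩
  have h1 : t * g ∣ t := by
    conv_rhs => rw [ht]
    refine Finset.dvd_gcd fun a ha => ?_
    have h2 := hg _ (Finset.mem_image_of_mem _ ha) _ (Finset.mem_image_of_mem _ hb)
    simp only [sub_self, Int.zero_ediv, sub_zero] at h2
    have h3 := mul_dvd_mul_left t h2
    rwa [Int.mul_ediv_cancel' (htd a ha)] at h3
  refine isUnit_of_dvd_one ((mul_dvd_mul_iff_left ht0).1 ?_)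
  rwa [mul_one]

/-- The main step for a primitive set `A` that is not fully distributed modulo `d i`. If some class
modulo `d i` is small, it is removed at a cost compensated by the `|A|` sums it contributes to.
If all classes are large, each of them contributes separately, and either shows a gain or is
treated by induction with a smaller error term, the modulus `d i` having disappeared. -/
lemma DilateData.improve_primitive (hd : DilateData I l d) {c D s : ℚ} (hD : 1 ≤ D)
    (hs : 1 ≤ s) (hcs : c + 1 / s ≤ s)
    (hc : ∀ A : Finset ℤ, c * A.card - D ≤ (dilSum I l (fun _ => A)).card)
    {A : Finset ℤ} (hprim : ∀ g : ℤ, (∀ a ∈ A, ∀ b ∈ A, g ∣ a - b) → IsUnit g)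
    (ih : ∀ B : Finset ℤ, B.card < A.card →
      (c + 1 / s) * B.card - badProd I d B * D ≤ (dilSum I l (fun _ => B)).card)
    {i : ι} (hi : i ∈ I) (hA : ¬ FullyDist (d i) A) :
    (c + 1 / s) * A.card - badProd I d A * D ≤ (dilSum I l (fun _ => A)).card := by
  classical
  have hs0 : 0 < s := by linarith
  have hne : A.Nonempty := by
    by_contra h
    rw [Finset.not_nonempty_iff_eq_empty] at h
    have := hprim 0 (by simp [h])
    simp at this
  have hdi : d i ≠ 1 := by
    intro h
    refine hA fun x => ?_
    obtain ⟨a, ha⟩ := hne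
    exact ⟨a, ha, by simp [h]⟩
  have hnotall : ¬ ∀ a ∈ A, ∀ b ∈ A, (d i : ℤ) ∣ a - b := by
    intro h
    have := hprim _ h
    rw [Int.isUnit_iff] at this
    omega
  have hN : (1 : ℚ) ≤ badProd I d A := by exact_mod_cast one_le_badProd hd.pos A
  have hDN : D ≤ badProd I d A * D := le_mul_of_one_le_left (by linarith) hN
  obtain ⟨j₀, hj₀, hj₀i⟩ := hd.exists_ne i hi
  by_cases hsmall : ∃ v ∈ A, s * (A.filter (fun a => (d i : ℤ) ∣ a - v)).card ≤ A.card
  · obtain ⟨v, hv, hsv⟩ := hsmall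
    set Av := A.filter (fun a => (d i : ℤ) ∣ a - v) with hAv
    set A1 := A.filter (fun a => ¬ (d i : ℤ) ∣ a - v) with hA1
    have hcard : A1.card + Av.card = A.card := by
      rw [add_comm]; exact Finset.card_filter_add_card_filter_not _
    have hvAv : v ∈ Av := by simp [hAv, hv]
    have hAvpos : 0 < Av.card := Finset.card_pos.2 ⟨v, hvAv⟩
    have hA1ne : A1.Nonempty := by
      by_contra h
      rw [Finset.not_nonempty_iff_eq_empty, hA1, Finset.filter_eq_empty_iff] at h
      simp only [not_not] at h
      refine hnotall fun a ha b hb => ?_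
      have := dvd_sub (h ha) (h hb)
      simpa using this
    have hsub1 : A1 ⊆ A := Finset.filter_subset _ _
    have h1 : (resSum I l i A1 A).card + (resSum I l i Av A).card
        ≤ (dilSum I l (fun _ => A)).card := by
      rw [← Finset.card_union_of_disjoint]
      · exact Finset.card_le_card (Finset.union_subset (resSum_subset hsub1)
          (resSum_subset (Finset.filter_subset _ _)))
      · refine hd.disjoint_resSum hi fun x hx y hy hxy => (Finset.mem_filter.1 hx).2 ?_
        have := dvd_add hxy (Finset.mem_filter.1 hy).2
        simpa using this
    have h2 : A.card ≤ (resSum I l i Av A).card := by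
      have := card_le_card_dilSum (B := fun j => if j = i then Av else A) hj₀ (hd.ne_zero _ hj₀)
        (by intro j _; split_ifs; exacts [⟨v, hvAv⟩, hne])
      rwa [if_neg hj₀i] at this
    have h12 : ((resSum I l i A1 A).card : ℚ) + A.card ≤ (dilSum I l (fun _ => A)).card := by
      exact_mod_cast (Nat.add_le_add_left h2 _).trans h1
    have hcardQ : (A1.card : ℚ) + Av.card = A.card := by exact_mod_cast hcard
    by_cases hlost : ∃ j ∈ I, j ≠ i ∧ FullyDist (d j) A ∧ ¬ FullyDist (d j) A1
    · obtain ⟨j, hj, hji, hjA, hjA1⟩ := hlost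
      have h3 := hd.gain_of_lost hi hj hji hsub1 hA1ne hjA hjA1
      have h3' : ((dilSum I l (fun _ => A1)).card : ℚ) + A1.card ≤ (resSum I l i A1 A).card := by
        exact_mod_cast h3
      have h4 := hc A1
      have h5 : (c + 1 / s) * Av.card ≤ A.card :=
        (mul_le_mul_of_nonneg_right hcs (Nat.cast_nonneg _)).trans hsv
      have h6 : 1 / s * (A1.card : ℚ) ≤ A1.card :=
        mul_le_of_le_one_left (Nat.cast_nonneg _) ((div_le_one hs0).2 hs)
      rw [← hcardQ] at h5 h12 ⊢
      linarith
    · push Not at hlost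
      have h3 : badProd I d A1 ≤ badProd I d A := by
        refine badProd_mono hd.pos fun j hj hjA => ?_
        by_cases hji : j = i
        · exact absurd (hji ▸ hjA) hA
        · exact hlost j hj hji hjA
      have h4 := ih A1 (by omega)
      have h5 : (badProd I d A1 : ℚ) * D ≤ badProd I d A * D :=
        mul_le_mul_of_nonneg_right (by exact_mod_cast h3) (by linarith)
      have h6 : ((dilSum I l (fun _ => A1)).card : ℚ) ≤ (resSum I l i A1 A).card := by
        exact_mod_cast Finset.card_le_card (dilSum_subset_resSum hsub1)
      have h7 : (c + 1 / s) * Av.card ≤ A.card :=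
        (mul_le_mul_of_nonneg_right hcs (Nat.cast_nonneg _)).trans hsv
      rw [← hcardQ] at h7 h12 ⊢
      linarith
  · push Not at hsmall
    obtain ⟨N', hN'1, hN', hN'le⟩ := exists_badProd_eq_mul hd.pos hi hA
    have hpos : (0 : ℤ) < d i := by exact_mod_cast hd.pos i hi
    have hN'Q : (1 : ℚ) ≤ N' := by exact_mod_cast hN'1
    have hDN' : D ≤ N' * D := le_mul_of_one_le_left (by linarith) hN'Q
    set R := A.image (fun a => a % (d i : ℤ)) with hR
    let K : ℤ → Finset ℤ := fun r => A.filter (fun a => a % (d i : ℤ) = r)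
    have hRcard : R.card ≤ d i := by
      have : R ⊆ (Finset.Ico 0 (d i : ℤ)) := by
        intro r hr
        obtain ⟨a, -, rfl⟩ := Finset.mem_image.1 hr
        exact Finset.mem_Ico.2 ⟨Int.emod_nonneg _ hpos.ne', Int.emod_lt_of_pos _ hpos⟩
      simpa using Finset.card_le_card this
    have h1 : ∑ r ∈ R, (resSum I l i (K r) A).card ≤ (dilSum I l (fun _ => A)).card := by
      rw [← Finset.card_biUnion]
      · exact Finset.card_le_card (Finset.biUnion_subset.2 fun r _ =>
          resSum_subset (Finset.filter_subset _ _))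
      · intro r _ r' _ hrr'
        refine hd.disjoint_resSum hi fun x hx y hy hxy => hrr' ?_
        rw [← (Finset.mem_filter.1 hx).2, ← (Finset.mem_filter.1 hy).2]
        exact Int.emod_eq_emod_iff_emod_sub_eq_zero.2 (Int.emod_eq_zero_of_dvd hxy)
    have h2 : ∀ r ∈ R, (c + 1 / s) * ((K r).card : ℚ) - N' * D ≤ (resSum I l i (K r) A).card := by
      intro r hr
      have hKsub : K r ⊆ A := Finset.filter_subset _ _
      have hKne : (K r).Nonempty := by
        obtain ⟨a, ha, har⟩ := Finset.mem_image.1 hr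
        exact ⟨a, Finset.mem_filter.2 ⟨ha, har⟩⟩
      have hKlt : (K r).card < A.card := by
        refine Finset.card_lt_card (Finset.ssubset_iff_subset_ne.2 ⟨hKsub, fun h => ?_⟩)
        refine hnotall fun a ha b hb => ?_
        rw [← h] at ha hb
        refine Int.dvd_of_emod_eq_zero (Int.emod_eq_emod_iff_emod_sub_eq_zero.1 ?_)
        rw [(Finset.mem_filter.1 ha).2, (Finset.mem_filter.1 hb).2]
      have hKle : ((K r).card : ℚ) ≤ A.card := by exact_mod_cast hKlt.le
      set X := (K r).image (fun a => a / (d i : ℤ)) with hX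
      have hKX : K r = X.image (fun a => (d i : ℤ) * a + r) := by
        rw [hX, Finset.image_image]
        conv_lhs => rw [← Finset.image_id (s := K r)]
        refine Finset.image_congr fun a ha => ?_
        have har := (Finset.mem_filter.1 ha).2
        simp only [id, Function.comp]
        rw [← har, Int.mul_ediv_add_emod]
      have hXne : X.Nonempty := hKne.image _
      have hXcard : X.card = (K r).card := by
        rw [hKX]
        refine (Finset.card_image_of_injective X fun x y hxy => ?_).symm
        simpa [(hd.pos i hi).ne'] using hxy
      have hsubQ : ((dilSum I l (fun _ => K r)).card : ℚ) ≤ (resSum I l i (K r) A).card := by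
        exact_mod_cast Finset.card_le_card (dilSum_subset_resSum hKsub)
      by_cases hXi : FullyDist (d i) X
      · by_cases hlost : ∃ j ∈ I, j ≠ i ∧ FullyDist (d j) A ∧ ¬ FullyDist (d j) (K r)
        · obtain ⟨j, hj, hji, hjA, hjK⟩ := hlost
          have h3 := hd.gain_of_lost hi hj hji hKsub hKne hjA hjK
          have h3' : ((dilSum I l (fun _ => K r)).card : ℚ) + (K r).card
              ≤ (resSum I l i (K r) A).card := by exact_mod_cast h3
          have h6 : 1 / s * ((K r).card : ℚ) ≤ (K r).card :=
            mul_le_of_le_one_left (Nat.cast_nonneg _) ((div_le_one hs0).2 hs)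
          linarith [hc (K r)]
        · push Not at hlost
          have h3 : badProd I d X ≤ N' := hN'le X hXi fun j hj hji hjA =>
            FullyDist.of_affine (hKX ▸ hlost j hj hji hjA)
          have h4 := ih X (by omega)
          have h5 : (badProd I d X : ℚ) * D ≤ N' * D :=
            mul_le_mul_of_nonneg_right (by exact_mod_cast h3) (by linarith)
          have h6 : (dilSum I l (fun _ => K r)).card = (dilSum I l (fun _ => X)).card := by
            rw [hKX]; exact card_dilSum_affine hpos.ne' X
          rw [h6] at hsubQ
          rw [hXcard] at h4
          linarith
      · obtain ⟨b, hb, h3⟩ := hd.gain_of_not_fullyDist hi (hKX ▸ hKsub) hXne hprim hXi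
        rw [← hKX] at h3
        have h3' : ((dilSum I l (fun _ => K r)).card : ℚ)
            + (A.filter (fun a => (d i : ℤ) ∣ a - b)).card
              ≤ (resSum I l i (K r) A).card := by exact_mod_cast h3
        have h6 : 1 / s * ((K r).card : ℚ) ≤ (A.filter (fun a => (d i : ℤ) ∣ a - b)).card := by
          rw [one_div, inv_mul_le_iff₀ hs0]
          linarith [hsmall b hb]
        linarith [hc (K r)]
    have h3 := Finset.sum_le_sum h2
    rw [Finset.sum_sub_distrib, ← Finset.mul_sum, Finset.sum_const, nsmul_eq_mul] at h3
    have h4 : ∑ r ∈ R, ((K r).card : ℚ) = A.card := by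
      exact_mod_cast (Finset.card_eq_sum_card_image (fun a => a % (d i : ℤ)) A).symm
    have h5 : ∑ r ∈ R, ((resSum I l i (K r) A).card : ℚ) ≤ (dilSum I l (fun _ => A)).card := by
      exact_mod_cast h1
    have h6 : (R.card : ℚ) * (N' * D) ≤ d i * (N' * D) :=
      mul_le_mul_of_nonneg_right (by exact_mod_cast hRcard) (by nlinarith)
    rw [h4] at h3
    rw [hN']
    push_cast
    linarith

/-- A bound of slope `c` valid for all sets improves to slope `c + 1 / s`, at the cost of
multiplying the error by `∏ d i`, as long as sets fully distributed modulo every `d i` satisfy the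
bound of slope `s`. -/
lemma DilateData.improve (hd : DilateData I l d) {c D s : ℚ} (hD : 1 ≤ D)
    (hs : 1 ≤ s) (hcs : c + 1 / s ≤ s)
    (hFD : ∀ A : Finset ℤ, (∀ i ∈ I, FullyDist (d i) A) →
      s * A.card - D ≤ (dilSum I l (fun _ => A)).card)
    (hc : ∀ A : Finset ℤ, c * A.card - D ≤ (dilSum I l (fun _ => A)).card) (A : Finset ℤ) :
    (c + 1 / s) * A.card - badProd I d A * D ≤ (dilSum I l (fun _ => A)).card := by
  classical
  have hs0 : 0 < s := by linarith
  induction hn : A.card using Nat.strong_induction_on generalizing A with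
  | _ n ih =>
    subst hn
    have hN : (1 : ℚ) ≤ badProd I d A := by exact_mod_cast one_le_badProd hd.pos A
    have hDN : D ≤ badProd I d A * D := le_mul_of_one_le_left (by linarith) hN
    by_cases hall : ∀ i ∈ I, FullyDist (d i) A
    · have h1 := hFD A hall
      have h2 := mul_le_mul_of_nonneg_right hcs (Nat.cast_nonneg (α := ℚ) A.card)
      linarith
    push Not at hall
    obtain ⟨i, hi, hA⟩ := hall
    rcases Nat.lt_or_ge A.card 2 with hlt | hge
    · rcases Nat.eq_zero_or_pos A.card with h0 | h1
      · rw [h0]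
        have : (0 : ℚ) ≤ (dilSum I l (fun _ => A)).card := Nat.cast_nonneg _
        push_cast
        linarith
      · have h1 : A.card = 1 := by omega
        obtain ⟨a, rfl⟩ := Finset.card_eq_one.1 h1
        have hdi : d i ≠ 1 := by
          intro h
          exact hA fun x => ⟨a, by simp, by simp [h]⟩
        obtain ⟨N', hN'1, hN', -⟩ := exists_badProd_eq_mul hd.pos hi hA
        have h2 : 2 ≤ badProd I d {a} := by
          have := hd.pos i hi
          rw [hN']
          calc 2 = 2 * 1 := rfl
            _ ≤ d i * N' := Nat.mul_le_mul (by omega) hN'1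
        have h2' : (2 : ℚ) ≤ badProd I d {a} := by exact_mod_cast h2
        have h3 := hc {a}
        have h4 : 1 / s ≤ 1 := (div_le_one hs0).2 hs
        have h5 : 2 * D ≤ badProd I d {a} * D :=
          mul_le_mul_of_nonneg_right h2' (by linarith)
        rw [h1] at h3 ⊢
        push_cast at h3 ⊢
        linarith
    · obtain ⟨t, b, ht, B, hAB, hprim⟩ := exists_primitive hge
      have hcard : A.card = B.card := by
        rw [hAB, Finset.card_image_of_injective]
        intro x y hxy
        simpa [ht] using hxy
      have hS : (dilSum I l (fun _ => A)).card = (dilSum I l (fun _ => B)).card := by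
        rw [hAB]; exact card_dilSum_affine ht B
      have hNB : badProd I d B ≤ badProd I d A :=
        badProd_mono hd.pos fun j _ h => FullyDist.of_affine (hAB ▸ h)
      have h1 : (c + 1 / s) * B.card - badProd I d B * D ≤ (dilSum I l (fun _ => B)).card := by
        by_cases hallB : ∀ i ∈ I, FullyDist (d i) B
        · have h1 := hFD B hallB
          have h2 := mul_le_mul_of_nonneg_right hcs (Nat.cast_nonneg (α := ℚ) B.card)
          have hN : (1 : ℚ) ≤ badProd I d B := by exact_mod_cast one_le_badProd hd.pos B
          have hDN : D ≤ badProd I d B * D := le_mul_of_one_le_left (by linarith) hN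
          linarith
        · push Not at hallB
          obtain ⟨i', hi', hB⟩ := hallB
          exact hd.improve_primitive hD hs hcs hc hprim
            (fun B' hB' => ih _ (hcard ▸ hB') B' rfl) hi' hB
      have h2 : (badProd I d B : ℚ) * D ≤ badProd I d A * D :=
        mul_le_mul_of_nonneg_right (by exact_mod_cast hNB) (by linarith)
      rw [hS, hcard]
      linarith

end Improve

/-! ### Induction on the number of dilates -/

section Induction

variable {ι : Type*} {I : Finset ι} {l : ι → ℤ}

lemma card_dilSum_mul {g : ℤ} (hg : g ≠ 0) (A : Finset ℤ) :
    (dilSum I (fun j => g * l j) (fun _ => A)).card = (dilSum I l (fun _ => A)).card := by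
  have h : dilSum I (fun j => g * l j) (fun _ => A)
      = (dilSum I l (fun _ => A)).image (fun x => g * x) := by
    ext x
    simp only [mem_dilSum, Finset.mem_image]
    constructor
    · rintro ⟨f, hf, rfl⟩
      refine ⟨_, ⟨f, hf, rfl⟩, ?_⟩
      rw [Finset.mul_sum]
      exact Finset.sum_congr rfl fun j _ => by ring
    · rintro ⟨_, ⟨f, hf, rfl⟩, rfl⟩
      refine ⟨f, hf, ?_⟩
      rw [Finset.mul_sum]
      exact Finset.sum_congr rfl fun j _ => by ring
  rw [h, Finset.card_image_of_injective]
  intro x y hxy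
  simpa [hg] using hxy

lemma one_le_prod_natAbs (hl : ∀ i ∈ I, l i ≠ 0) : 1 ≤ ∏ j ∈ I, (l j).natAbs :=
  Finset.one_le_prod' fun i hi => Int.natAbs_pos.2 (hl i hi)

lemma natAbs_le_prod (hl : ∀ i ∈ I, l i ≠ 0) {i : ι} (hi : i ∈ I) :
    (l i).natAbs ≤ ∏ j ∈ I, (l j).natAbs :=
  Finset.single_le_prod' (f := fun j => (l j).natAbs)
    (fun j hj => Int.natAbs_pos.2 (hl j hj)) hi

lemma natCast_gcd_natAbs (J : Finset ι) (l : ι → ℤ) : ((J.gcd l).natAbs : ℤ) = J.gcd l := by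
  rw [Int.natCast_natAbs, Int.abs_eq_normalize, Finset.normalize_gcd]

/-- The moduli `d i` are pairwise coprime divisors of `∏ l j`. -/
lemma DilateData.prod_le {d : ι → ℕ} (hd : DilateData I l d) :
    ∏ i ∈ I, d i ≤ ∏ j ∈ I, (l j).natAbs := by
  have h : ∏ i ∈ I, (d i : ℤ) ∣ ∏ j ∈ I, l j := by
    refine Finset.prod_dvd_of_coprime ?_ ?_
    · intro i hi j hj hij
      exact (hd.coprime i hi).of_isCoprime_of_dvd_right (hd.dvd j hj i hi hij)
    · intro i hi
      obtain ⟨j, hj, hji⟩ := hd.exists_ne i hi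
      exact (hd.dvd i hi j hj hji).trans (Finset.dvd_prod_of_mem l hj)
  have h2 := Int.natAbs_dvd_natAbs.2 h
  rw [← Int.natAbsHom_apply, ← Int.natAbsHom_apply, map_prod, map_prod] at h2
  simp only [Int.natAbsHom_apply, Int.natAbs_natCast] at h2
  exact Nat.le_of_dvd (one_le_prod_natAbs hd.ne_zero) h2

variable [LinearOrder ι]

lemma dilateData_gcd (hI : 2 ≤ I.card) (hl : ∀ i ∈ I, l i ≠ 0) (hg : I.gcd l = 1) :
    DilateData I l (fun i => ((I.erase i).gcd l).natAbs) where
  ne_zero := hl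
  exists_ne i _ := Finset.exists_mem_ne (show 1 < I.card from hI) i
  pos i hi := by
    obtain ⟨j, hj, hji⟩ := Finset.exists_mem_ne (show 1 < I.card from hI) i
    refine Int.natAbs_pos.2 fun h => hl j hj ?_
    exact Finset.gcd_eq_zero_iff.1 h j (Finset.mem_erase.2 ⟨hji, hj⟩)
  dvd i _ j hj hji := by
    rw [natCast_gcd_natAbs]
    exact Finset.gcd_dvd (Finset.mem_erase.2 ⟨hji, hj⟩)
  coprime i hi := by
    rw [natCast_gcd_natAbs]
    refine IsCoprime.symm ((gcd_isUnit_iff _ _).1 ?_)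
    rw [← Finset.gcd_insert, Finset.insert_erase hi, hg]
    exact isUnit_one
  gcd_eq i hi g x h := by
    obtain ⟨j, hj, hji⟩ := Finset.exists_mem_ne (show 1 < I.card from hI) i
    have hne : (I.erase i).gcd l ≠ 0 := fun h =>
      hl j hj (Finset.gcd_eq_zero_iff.1 h j (Finset.mem_erase.2 ⟨hji, hj⟩))
    rw [natCast_gcd_natAbs] at h
    have h1 : g * (I.erase i).gcd l ∣ (I.erase i).gcd (fun j => l j * x) :=
      Finset.dvd_gcd fun j hj => h j (Finset.mem_of_mem_erase hj) (Finset.ne_of_mem_erase hj)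
    rw [Finset.gcd_mul_right, mul_comm] at h1
    exact dvd_normalize_iff.1 ((mul_dvd_mul_iff_left hne).1 h1)

/-- The bound of slope `∑ |l j|` for sets fully distributed modulo every `d i`, deduced from the
bound `ih` for one dilate fewer. -/
lemma card_dilSum_of_fullyDist {n : ℕ}
    (ih : ∀ (J : Finset ι) (m : ι → ℤ), J.card = n + 1 → (∀ i ∈ J, m i ≠ 0) → J.gcd m = 1 →
      ∀ A : Finset ℤ, ((∑ j ∈ J, (m j).natAbs : ℕ) : ℚ) * A.card
        - n * ((∏ j ∈ J, (m j).natAbs : ℕ) : ℚ) ^ (n * ((∑ j ∈ J, (m j).natAbs) ^ 2 + 1))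
          ≤ (dilSum J m (fun _ => A)).card)
    (hI : I.card = n + 2) (hl : ∀ i ∈ I, l i ≠ 0) (hg : I.gcd l = 1) (A : Finset ℤ)
    (hA : ∀ i ∈ I, FullyDist ((I.erase i).gcd l).natAbs A) :
    ((∑ j ∈ I, (l j).natAbs : ℕ) : ℚ) * A.card
        - (n + 1) * ((∏ j ∈ I, (l j).natAbs : ℕ) : ℚ)
            ^ (n * ((∑ j ∈ I, (l j).natAbs) ^ 2 + 1) + 1)
      ≤ (dilSum I l (fun _ => A)).card := by
  have hd := dilateData_gcd (by omega) hl hg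
  set d : ι → ℕ := fun i => ((I.erase i).gcd l).natAbs with hdef
  set σ := ∑ j ∈ I, (l j).natAbs with hσ
  set P := ∏ j ∈ I, (l j).natAbs with hP
  have hP1 : 1 ≤ P := one_le_prod_natAbs hl
  have h1 := hd.sum_mul_card_le hA (by omega)
  have hX : 1 ≤ (P : ℚ) ^ (n * (σ ^ 2 + 1) + 1) := one_le_pow₀ (by exact_mod_cast hP1)
  set X := (P : ℚ) ^ (n * (σ ^ 2 + 1) + 1) with hXdef
  have h2 : ∀ i ∈ I, ((σ : ℚ) - (l i).natAbs) * A.card - n * X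
      ≤ d i * (dilSum (I.erase i) l (fun _ => A)).card := by
    intro i hi
    obtain ⟨j₀, hj₀, hj₀i⟩ := hd.exists_ne i hi
    have hj₀E : j₀ ∈ I.erase i := Finset.mem_erase.2 ⟨hj₀i, hj₀⟩
    obtain ⟨m, hm, hm1⟩ := Finset.extract_gcd l ⟨j₀, hj₀E⟩
    have hdi : (d i : ℤ) = (I.erase i).gcd l := natCast_gcd_natAbs _ _
    rw [← hdi] at hm
    have hdpos := hd.pos i hi
    have hmabs : ∀ j ∈ I.erase i, (l j).natAbs = d i * (m j).natAbs := by
      intro j hj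
      rw [hm j hj, Int.natAbs_mul, Int.natAbs_natCast]
    have hm0 : ∀ j ∈ I.erase i, m j ≠ 0 := by
      intro j hj h0
      refine hl j (Finset.mem_of_mem_erase hj) ?_
      rw [hm j hj, h0, mul_zero]
    have h3 := ih (I.erase i) m (by rw [Finset.card_erase_of_mem hi]; omega) hm0 hm1 A
    have hS : (dilSum (I.erase i) l (fun _ => A)).card
        = (dilSum (I.erase i) m (fun _ => A)).card := by
      rw [← card_dilSum_mul (l := m) (show (d i : ℤ) ≠ 0 by exact_mod_cast hdpos.ne')]
      congr 1
      exact Finset.sum_congr rfl fun j hj => by rw [hm j hj]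
    set σ' := ∑ j ∈ I.erase i, (m j).natAbs with hσ'
    set P' := ∏ j ∈ I.erase i, (m j).natAbs with hP'
    have hP'1 : 1 ≤ P' := one_le_prod_natAbs hm0
    have hσ'' : d i * σ' + (l i).natAbs = σ := by
      rw [hσ, ← Finset.sum_erase_add _ _ hi, hσ', Finset.mul_sum]
      congr 1
      exact Finset.sum_congr rfl fun j hj => (hmabs j hj).symm
    have hσle : σ' ≤ σ :=
      ((Nat.le_mul_of_pos_left σ' hdpos).trans (Nat.le_add_right _ _)).trans_eq hσ''
    have hP'le : P' ≤ P := by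
      rw [hP, ← Finset.prod_erase_mul _ _ hi]
      calc P' ≤ ∏ j ∈ I.erase i, (l j).natAbs := by
            refine Finset.prod_le_prod' fun j hj => ?_
            rw [hmabs j hj]
            exact Nat.le_mul_of_pos_left _ hdpos
        _ ≤ _ := Nat.le_mul_of_pos_right _ (Int.natAbs_pos.2 (hl i hi))
    have hdle : d i ≤ P := by
      refine le_trans ?_ (natAbs_le_prod hl hj₀)
      rw [hmabs j₀ hj₀E]
      exact Nat.le_mul_of_pos_right _ (Int.natAbs_pos.2 (hm0 j₀ hj₀E))
    have hpow : d i * P' ^ (n * (σ' ^ 2 + 1)) ≤ P ^ (n * (σ ^ 2 + 1) + 1) := by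
      rw [pow_succ, mul_comm]
      refine Nat.mul_le_mul ?_ hdle
      calc P' ^ (n * (σ' ^ 2 + 1)) ≤ P ^ (n * (σ' ^ 2 + 1)) := Nat.pow_le_pow_left hP'le _
        _ ≤ _ := Nat.pow_le_pow_right hP1 (by gcongr)
    have hpowQ : (d i : ℚ) * (P' : ℚ) ^ (n * (σ' ^ 2 + 1)) ≤ X := by
      rw [hXdef]
      exact_mod_cast hpow
    have hσQ : (d i : ℚ) * σ' + (l i).natAbs = σ := by exact_mod_cast hσ''
    have h4 := mul_le_mul_of_nonneg_left h3 (Nat.cast_nonneg (α := ℚ) (d i))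
    have h5 := mul_le_mul_of_nonneg_left hpowQ (Nat.cast_nonneg (α := ℚ) n)
    rw [hS, ← hσQ]
    linarith
  have h3 := Finset.sum_le_sum h2
  rw [Finset.sum_sub_distrib, ← Finset.sum_mul, Finset.sum_sub_distrib, Finset.sum_const,
    Finset.sum_const, hI, nsmul_eq_mul, nsmul_eq_mul] at h3
  have hσQ : ∑ i ∈ I, ((l i).natAbs : ℚ) = σ := by rw [hσ]; push_cast; rfl
  have h1Q : ∑ i ∈ I, (d i : ℚ) * (dilSum (I.erase i) l (fun _ => A)).card
      + (dilSum I l (fun _ => A)).card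
        ≤ (n + 2) * (dilSum I l (fun _ => A)).card + ((∏ i ∈ I, d i : ℕ) : ℚ) := by
    rw [hI] at h1
    exact_mod_cast h1
  have hQ : ((∏ i ∈ I, d i : ℕ) : ℚ) ≤ X := by
    have h4 : (P : ℚ) ≤ X := le_self_pow₀ (by exact_mod_cast hP1) (by omega)
    exact le_trans (by exact_mod_cast hd.prod_le) h4
  rw [hσQ] at h3
  push_cast at h3
  have h4 : (0 : ℚ) < n + 1 := by positivity
  refine le_of_mul_le_mul_left ?_ h4
  linarith

/-- The bound with the error term `n * P ^ (n * (σ ^ 2 + 1))`, for `n + 1` dilates. The slope is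
raised from `0` to `σ` in `σ ^ 2` steps of size `1 / σ`, each multiplying the error by at most
`P`. -/
lemma card_dilSum_ge (n : ℕ) : ∀ (I : Finset ι) (l : ι → ℤ), I.card = n + 1 →
    (∀ i ∈ I, l i ≠ 0) → I.gcd l = 1 → ∀ A : Finset ℤ,
      ((∑ j ∈ I, (l j).natAbs : ℕ) : ℚ) * A.card
        - n * ((∏ j ∈ I, (l j).natAbs : ℕ) : ℚ) ^ (n * ((∑ j ∈ I, (l j).natAbs) ^ 2 + 1))
          ≤ (dilSum I l (fun _ => A)).card := by
  induction n with
  | zero =>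
    intro I l hI hl hg A
    obtain ⟨i, rfl⟩ := Finset.card_eq_one.1 hI
    rw [Finset.gcd_singleton, ← Int.abs_eq_normalize, Int.abs_eq_natAbs] at hg
    have h1 : (l i).natAbs = 1 := by exact_mod_cast hg
    have h2 := card_le_card_dilSum (B := fun _ => A) (Finset.mem_singleton_self i)
      (hl i (Finset.mem_singleton_self i))
    rcases A.eq_empty_or_nonempty with rfl | hA
    · simp
    · have h3 : (A.card : ℚ) ≤ (dilSum {i} l (fun _ => A)).card := by
        exact_mod_cast h2 fun _ _ => hA
      simpa [h1] using h3
  | succ n ih =>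
    intro I l hI hl hg
    have hd := dilateData_gcd (by omega) hl hg
    set d : ι → ℕ := fun i => ((I.erase i).gcd l).natAbs with hdef
    have hFD := card_dilSum_of_fullyDist ih hI hl hg
    set σ := ∑ j ∈ I, (l j).natAbs with hσ
    set P := ∏ j ∈ I, (l j).natAbs with hP
    have hP1 : 1 ≤ P := one_le_prod_natAbs hl
    have hP1Q : (1 : ℚ) ≤ P := by exact_mod_cast hP1
    have hσ1 : 1 ≤ σ := by
      obtain ⟨i, hi⟩ := Finset.card_pos.1 (show 0 < I.card by omega)
      exact (Int.natAbs_pos.2 (hl i hi)).trans_le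
        (Finset.single_le_sum (f := fun j => (l j).natAbs) (fun _ _ => Nat.zero_le _) hi)
    have hσoneQ : (1 : ℚ) ≤ σ := by exact_mod_cast hσ1
    have hσ0 : (0 : ℚ) < σ := by linarith
    set D : ℚ := (n + 1) * (P : ℚ) ^ (n * (σ ^ 2 + 1) + 1) with hD
    have hD1 : 1 ≤ D := one_le_mul_of_one_le_of_one_le
      (by linarith [Nat.cast_nonneg (α := ℚ) n]) (one_le_pow₀ hP1Q)
    have hbad : ∀ A, badProd I d A ≤ P := by
      classical
      exact fun A => (Finset.prod_le_prod_of_subset_of_one_le' (Finset.filter_subset _ _)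
        fun i hi _ => hd.pos i hi).trans hd.prod_le
    have key : ∀ m : ℕ, m ≤ σ ^ 2 → ∀ A : Finset ℤ,
        (m : ℚ) / σ * A.card - (P : ℚ) ^ m * D ≤ (dilSum I l (fun _ => A)).card := by
      intro m
      induction m with
      | zero =>
        intro _ A
        have : (0 : ℚ) ≤ (dilSum I l (fun _ => A)).card := Nat.cast_nonneg _
        simp only [Nat.cast_zero, zero_div, zero_mul, pow_zero, one_mul]
        linarith
      | succ m ihm =>
        intro hm A
        have hPm : 1 ≤ (P : ℚ) ^ m := one_le_pow₀ hP1Q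
        have hDm : D ≤ (P : ℚ) ^ m * D := le_mul_of_one_le_left (by linarith) hPm
        have hc : (m : ℚ) / σ + 1 / σ = ((m + 1 : ℕ) : ℚ) / σ := by push_cast; ring
        have hmQ : ((m + 1 : ℕ) : ℚ) ≤ σ ^ 2 := by exact_mod_cast hm
        have h1 := hd.improve (c := (m : ℚ) / σ) (D := (P : ℚ) ^ m * D) (s := σ)
          (by linarith) hσoneQ
          (by rw [hc, div_le_iff₀ hσ0]; linarith)
          (fun A hA => by linarith [hFD A hA]) (ihm (by omega)) A
        rw [hc] at h1
        have h2 : (badProd I d A : ℚ) * ((P : ℚ) ^ m * D) ≤ P * ((P : ℚ) ^ m * D) :=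
          mul_le_mul_of_nonneg_right (by exact_mod_cast hbad A) (by linarith)
        rw [pow_succ]
        linarith
    intro A
    have h1 := key (σ ^ 2) le_rfl A
    have h2 : ((σ ^ 2 : ℕ) : ℚ) / σ = σ := by
      push_cast
      field_simp
    have h3 : (P : ℚ) ^ (σ ^ 2) * D = (n + 1) * (P : ℚ) ^ ((n + 1) * (σ ^ 2 + 1)) := by
      rw [hD]
      ring
    rw [h2, h3] at h1
    exact_mod_cast h1

end Induction


/-- **Sum of many dilates with an explicit constant.** For coprime nonzero integers
`λ₁, …, λ_k` and any finite `A ⊆ ℤ`,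
`|λ₁·A + … + λ_k·A| ≥ (|λ₁| + … + |λ_k|)·|A| − C` with
`C = (1/3)·binom(k+1,2)·|λ₁⋯λ_k|^((k−1)(|λ₁|+…+|λ_k|)² + k − 1)`. -/
theorem sum_of_many_dilates_explicit (k : ℕ) (hk : 1 ≤ k) (l : Fin k → ℤ)
    (hl : ∀ i, l i ≠ 0) (hcop : Finset.univ.gcd l = 1) (A : Finset ℤ) :
    (∑ i, (|l i| : ℚ)) * A.card -
        (1 / 3 : ℚ) * ((k + 1).choose 2) *
          ((|∏ i, l i| : ℤ) : ℚ) ^ ((k - 1) * (∑ i, (l i).natAbs) ^ 2 + (k - 1))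
      ≤ ((∑ i, A.image (fun a => l i * a)).card : ℚ) := by
  obtain ⟨n, rfl⟩ : ∃ n, k = n + 1 := ⟨k - 1, by omega⟩
  have h1 := card_dilSum_ge n Finset.univ l (by simp) (fun i _ => hl i) hcop A
  have hσ : (∑ i, (|l i| : ℚ)) = ((∑ i, (l i).natAbs : ℕ) : ℚ) := by
    push_cast
    exact Finset.sum_congr rfl fun i _ => by rw [Nat.cast_natAbs, Int.cast_abs]
  have hP : ((|∏ i, l i| : ℤ) : ℚ) = ((∏ i, (l i).natAbs : ℕ) : ℚ) := by
    rw [Finset.abs_prod]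
    push_cast
    exact Finset.prod_congr rfl fun i _ => by rw [Nat.cast_natAbs, Int.cast_abs]
  have hP1 : (1 : ℚ) ≤ ((∏ i, (l i).natAbs : ℕ) : ℚ) := by
    exact_mod_cast one_le_prod_natAbs (I := Finset.univ) fun i _ => hl i
  have hexp : (n + 1 - 1) * (∑ i, (l i).natAbs) ^ 2 + (n + 1 - 1)
      = n * ((∑ i, (l i).natAbs) ^ 2 + 1) := by
    rw [Nat.add_sub_cancel]
    ring
  -- this is `(n - 1) * (n - 2) ≥ 0`, which holds since `n` is an integer
  have hconst : (n : ℚ) ≤ 1 / 3 * ((n + 1 + 1).choose 2 : ℕ) := by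
    rw [Nat.cast_choose_two]
    have h2 : (0 : ℤ) ≤ ((n : ℤ) - 1) * (n - 2) := by
      rcases le_or_gt (n : ℤ) 1 with h | h <;> nlinarith
    have h3 : (0 : ℚ) ≤ ((n : ℚ) - 1) * (n - 2) := by exact_mod_cast h2
    push_cast
    nlinarith
  have h2 := mul_le_mul_of_nonneg_right hconst (zero_le_one.trans (one_le_pow₀ hP1
    (n := n * ((∑ i, (l i).natAbs) ^ 2 + 1))))
  rw [hσ, hP, hexp]
  exact (sub_le_sub_left h2 _).trans h1
end

section
/- Let k ≥ 2 and let A1, ..., Ak be finite, nonempty subsets of the integers. For each 1 ≤ i ≤ k write S_i := A1 + ... + A_{i−1} + A_{i+1} + ... + Ak (the sum of all the sets omitting A_i). Then |A1 + ... + Ak| ≥ (1/(k−1))·((Σ_{i=1}^{k} |S_i|) − 1). -/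
open Pointwise

/-!
Let `mᵢ` and `Mᵢ` be the minimum and maximum of `Aᵢ`, let `S` be the full sumset, and let
`Tₙ = ∑_{j < n} Mⱼ + ∑_{j ≥ n} mⱼ`, so that `Tᵢ₊₁ - Tᵢ = Mᵢ - mᵢ`. The points `T₀ ≤ … ≤ T_k` run
from `min S` to `max S`. Cut `Sᵢ` at `Tᵢ - mᵢ`: translating the lower part by `mᵢ` and the upper
part by `Mᵢ` embeds `Sᵢ` in `S` while avoiding the interval `(Tᵢ, Tᵢ₊₁]`, whence
`|Sᵢ| + |S ∩ (Tᵢ, Tᵢ₊₁]| ≤ |S|` (`card_le_below_add_above`). These intervals tile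
`(min S, max S]`, which contains all of `S` but one point, so summing over `i` gives
`∑ |Sᵢ| + |S| - 1 ≤ k |S|`.
-/

lemma sum_le_of_mem_sum {ι : Type*} [DecidableEq ι] (s : Finset ι) (A : ι → Finset ℤ)
    (m : ι → ℤ) (hm : ∀ i, ∀ x ∈ A i, m i ≤ x) :
    ∀ x ∈ ∑ i ∈ s, A i, ∑ i ∈ s, m i ≤ x := by
  induction s using Finset.induction_on with
  | empty => simp
  | insert a s ha ih =>
    intro x hx
    rw [Finset.sum_insert ha, Finset.mem_add] at hx
    obtain ⟨y, hy, z, hz, rfl⟩ := hx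
    rw [Finset.sum_insert ha]
    exact add_le_add (hm a y hy) (ih z hz)

lemma le_sum_of_mem_sum {ι : Type*} [DecidableEq ι] (s : Finset ι) (A : ι → Finset ℤ)
    (M : ι → ℤ) (hM : ∀ i, ∀ x ∈ A i, x ≤ M i) :
    ∀ x ∈ ∑ i ∈ s, A i, x ≤ ∑ i ∈ s, M i := by
  induction s using Finset.induction_on with
  | empty => simp
  | insert a s ha ih =>
    intro x hx
    rw [Finset.sum_insert ha, Finset.mem_add] at hx
    obtain ⟨y, hy, z, hz, rfl⟩ := hx
    rw [Finset.sum_insert ha]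
    exact add_le_add (hM a y hy) (ih z hz)

/-- If `B + m` and `B + M` both lie in `S`, then `|B|` is at most the number of elements of `S`
outside the interval `(t, t + (M - m)]`: shift the elements of `B` up to `t - m` by `m` and the
remaining ones by `M`. -/
lemma card_le_below_add_above (B S : Finset ℤ) (m M t : ℤ)
    (hm : ∀ x ∈ B, m + x ∈ S) (hM : ∀ x ∈ B, M + x ∈ S) :
    B.card ≤ (S.filter (· ≤ t)).card + (S.filter (¬ · ≤ t + (M - m))).card := by
  rw [← Finset.card_filter_add_card_filter_not (s := B) (fun x => m + x ≤ t)]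
  apply add_le_add
  · apply Finset.card_le_card_of_injOn (fun x => m + x)
    · intro x hx
      simp only [Finset.coe_filter, Set.mem_ofPred_eq] at hx ⊢
      exact ⟨hm x hx.1, hx.2⟩
    · exact (add_right_injective m).injOn
  · apply Finset.card_le_card_of_injOn (fun x => M + x)
    · intro x hx
      simp only [Finset.coe_filter, Set.mem_ofPred_eq] at hx ⊢
      exact ⟨hM x hx.1, by linarith [hx.2]⟩
    · exact (add_right_injective M).injOn

/-- **Gyarmati–Matolcsi–Ruzsa.** For finite nonempty sets `A₁, …, A_k ⊆ ℤ` (`k ≥ 2`),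
writing `Sᵢ` for the sumset of all the `Aⱼ` with `j ≠ i`, one has
`|A₁ + … + A_k| ≥ (1/(k−1))·((Σᵢ |Sᵢ|) − 1)`. -/
theorem gyarmati_matolcsi_ruzsa (k : ℕ) (hk : 2 ≤ k)
    (A : Fin k → Finset ℤ) (hA : ∀ i, (A i).Nonempty) :
    (1 / ((k : ℚ) - 1)) *
        ((∑ i : Fin k, ((∑ j ∈ Finset.univ.erase i, A j).card : ℚ)) - 1)
      ≤ ((∑ i, A i).card : ℚ) := by
  set S := ∑ i, A i with hS
  let m : Fin k → ℤ := fun i => (A i).min' (hA i)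
  let M : Fin k → ℤ := fun i => (A i).max' (hA i)
  let T : ℕ → ℤ := fun n => ∑ j : Fin k, if j.val < n then M j else m j
  let F : ℕ → ℚ := fun n => ((S.filter (· ≤ T n)).card : ℚ)
  have hT (i : Fin k) : T (i + 1) = T i + (M i - m i) := by
    simp only [T]
    rw [← Finset.add_sum_erase _ _ (Finset.mem_univ i),
      ← Finset.add_sum_erase (a := i) _ (fun j : Fin k => if j.val < i.val then M j else m j)
        (Finset.mem_univ i)]
    have : ∑ j ∈ Finset.univ.erase i, (if j.val < i.val + 1 then M j else m j)
        = ∑ j ∈ Finset.univ.erase i, (if j.val < i.val then M j else m j) := by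
      refine Finset.sum_congr rfl fun j hj => ?_
      have hne : j.val ≠ i.val := fun h => (Finset.ne_of_mem_erase hj) (Fin.ext h)
      have : j.val < i.val + 1 ↔ j.val < i.val := by omega
      simp only [this]
    rw [this, if_pos (Nat.lt_succ_self _), if_neg (lt_irrefl _)]
    ring
  have hstep (i : Fin k) :
      ((∑ j ∈ Finset.univ.erase i, A j).card : ℚ) ≤ S.card - (F (i + 1) - F i) := by
    have hsum : A i + ∑ j ∈ Finset.univ.erase i, A j = S :=
      Finset.add_sum_erase _ _ (Finset.mem_univ i)
    have h := card_le_below_add_above (∑ j ∈ Finset.univ.erase i, A j) S (m i) (M i) (T i)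
      (fun x hx => hsum ▸ Finset.add_mem_add ((A i).min'_mem (hA i)) hx)
      (fun x hx => hsum ▸ Finset.add_mem_add ((A i).max'_mem (hA i)) hx)
    rw [← hT i] at h
    have h2 := Finset.card_filter_add_card_filter_not (s := S) (fun x => x ≤ T (i + 1))
    have h' : ((∑ j ∈ Finset.univ.erase i, A j).card : ℚ) ≤
        F i + ((S.filter (¬ · ≤ T (i + 1))).card : ℚ) := by
      simp only [F]
      exact_mod_cast h
    have h2' : F (i + 1) + ((S.filter (¬ · ≤ T (i + 1))).card : ℚ) = S.card := by
      simp only [F]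
      exact_mod_cast h2
    linarith
  have hF0 : F 0 ≤ 1 := by
    have : (S.filter (· ≤ T 0)).card ≤ 1 := by
      refine (Finset.card_le_card (t := {T 0}) fun x hx => ?_).trans (by simp)
      rw [Finset.mem_filter] at hx
      have := sum_le_of_mem_sum Finset.univ A m (fun i x hx => (A i).min'_le x hx) x hx.1
      rw [Finset.mem_singleton]
      exact le_antisymm hx.2 (by simpa [T] using this)
    simpa only [F, Nat.cast_le_one] using this
  have hFk : F k = S.card := by
    simp only [F]
    rw [Finset.filter_true_of_mem]
    intro x hx
    have := le_sum_of_mem_sum Finset.univ A M (fun i x hx => (A i).le_max' x hx) x hx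
    simpa [T] using this
  have htel : ∑ i : Fin k, (F (i + 1) - F i) = F k - F 0 := by
    rw [Fin.sum_univ_eq_sum_range (fun n => F (n + 1) - F n) k, Finset.sum_range_sub]
  have htot := Finset.sum_le_sum (s := Finset.univ) fun i _ => hstep i
  rw [Finset.sum_sub_distrib, htel, hFk] at htot
  simp only [Finset.sum_const, Finset.card_univ, Fintype.card_fin, nsmul_eq_mul] at htot
  have hk' : (0 : ℚ) < k - 1 := by
    have : (2 : ℚ) ≤ k := by exact_mod_cast hk
    linarith
  rw [one_div, inv_mul_le_iff₀ hk']
  linarith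
end

section
/- Let k ≥ 2 and let λ1, ..., λk be coprime nonzero integers, and for each 1 ≤ i ≤ k let g_i = gcd(λ1, ..., λ_{i−1}, λ_{i+1}, ..., λk). Let A be a finite nonempty subset of the integers, and for each i partition A into its nonempty residue classes mod g_i: A = ⋃_{j=1}^{m_i} A_{ij}, where A_{ij} is the set of elements of A congruent to a_{ij} mod g_i, with 0 ≤ a_{i1} < a_{i2} < ... < a_{i m_i} < g_i. Then the sets λ1·A_{1 j_1} + ... + λk·A_{k j_k}, as (j_1, ..., j_k) ranges over all tuples with 1 ≤ j_i ≤ m_i, are pairwise disjoint, and consequently |λ1·A + ... + λk·A| = Σ_{j_1=1}^{m_1} ⋯ Σ_{j_k=1}^{m_k} |λ1·A_{1 j_1} + ... + λk·A_{k j_k}|. -/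
/-!
A solution of `∑ lᵢ aᵢ = x` determines every `aᵢ` modulo `gᵢ`. For two solutions `a`, `a'`, all
terms of `∑ lⱼ (aⱼ - a'ⱼ) = 0` with `j ≠ i` are divisible by `gᵢ`, so `gᵢ ∣ lᵢ (aᵢ - a'ᵢ)`; as the
`lᵢ` are jointly coprime, `gᵢ` is coprime to `lᵢ`, whence `gᵢ ∣ aᵢ - a'ᵢ`
(`dvd_sub_of_sum_mul_eq`). Thus an element of the full sumset lies in the piece indexed by `r` for
exactly one tuple of residues `r`, and the pieces partition the sumset. All residues modulo `gᵢ`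
lie in `[0, gᵢ)` because `gᵢ > 0`, which needs a second, nonzero coefficient.
-/

open Pointwise

theorem mem_sum_image_mul {k : ℕ} (l : Fin k → ℤ) (C : Fin k → Finset ℤ) (x : ℤ) :
    x ∈ ∑ i, (C i).image (fun a => l i * a) ↔
      ∃ f : Fin k → ℤ, (∀ i, f i ∈ C i) ∧ ∑ i, l i * f i = x := by
  rw [← Finset.mem_coe, Finset.coe_sum, Set.mem_fintype_sum]
  constructor
  · rintro ⟨y, hy, rfl⟩
    have hy' : ∀ i, ∃ a ∈ C i, l i * a = y i := fun i => by simpa using hy i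
    choose f hf hfy using hy'
    exact ⟨f, hf, Finset.sum_congr rfl fun i _ => hfy i⟩
  · rintro ⟨f, hf, rfl⟩
    exact ⟨fun i => l i * f i, fun i =>
      Finset.mem_coe.2 (Finset.mem_image_of_mem (fun a => l i * a) (hf i)), rfl⟩

/-- The value of an integer linear form with coprime coefficients `l` determines its `i`-th
argument modulo the gcd of the other coefficients, since that gcd is coprime to `l i`. -/
theorem dvd_sub_of_sum_mul_eq {k : ℕ} {l f f' : Fin k → ℤ} (hcop : Finset.univ.gcd l = 1)
    (h : ∑ j, l j * f j = ∑ j, l j * f' j) (i : Fin k) :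
    (Finset.univ.erase i).gcd l ∣ f i - f' i := by
  set d := (Finset.univ.erase i).gcd l with hd
  have hrel : IsCoprime d (l i) := by
    rw [← Finset.insert_erase (Finset.mem_univ i), Finset.gcd_insert, ← hd] at hcop
    rw [← gcd_isUnit_iff, gcd_comm]
    exact hcop ▸ isUnit_one
  have hdvd : d ∣ ∑ j ∈ Finset.univ.erase i, l j * (f j - f' j) :=
    Finset.dvd_sum fun j hj => (Finset.gcd_dvd hj).mul_right _
  have hsum : l i * (f i - f' i) + ∑ j ∈ Finset.univ.erase i, l j * (f j - f' j) = 0 := by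
    rw [Finset.add_sum_erase _ (fun j => l j * (f j - f' j)) (Finset.mem_univ i)]
    simp [mul_sub, h]
  exact hrel.dvd_of_dvd_mul_left ((dvd_add_left hdvd).1 (hsum ▸ dvd_zero d))

/-- Partitioning `A` into residue classes `B i r = {a ∈ A : a ≡ r (mod gᵢ)}` where
`gᵢ = gcd(λ₁, …, λ̂ᵢ, …, λ_k)`, the sumsets `λ₁·B 1 r₁ + … + λ_k·B k r_k` are pairwise
disjoint as the tuple of residues varies, and hence
`|λ₁·A + … + λ_k·A| = Σ_{r} |λ₁·B 1 r₁ + … + λ_k·B k r_k|`. -/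
theorem sum_dilates_partition (k : ℕ) (hk : 2 ≤ k) (l : Fin k → ℤ)
    (hl : ∀ i, l i ≠ 0) (hcop : Finset.univ.gcd l = 1)
    (A : Finset ℤ) (hA : A.Nonempty)
    (g : Fin k → ℤ) (hg : ∀ i, g i = (Finset.univ.erase i).gcd l)
    (B : Fin k → ℤ → Finset ℤ)
    (hB : ∀ i r, B i r = A.filter (fun a => a % g i = r)) :
    (∀ r ∈ Fintype.piFinset (fun i => Finset.Ico (0 : ℤ) (g i)),
      ∀ r' ∈ Fintype.piFinset (fun i => Finset.Ico (0 : ℤ) (g i)),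
        r ≠ r' →
          Disjoint (∑ i, (B i (r i)).image (fun a => l i * a))
            (∑ i, (B i (r' i)).image (fun a => l i * a))) ∧
    ((∑ i, A.image (fun a => l i * a)).card =
      ∑ r ∈ Fintype.piFinset (fun i => Finset.Ico (0 : ℤ) (g i)),
        (∑ i, (B i (r i)).image (fun a => l i * a)).card) := by
  have hgpos : ∀ i, 0 < g i := by
    intro i
    have : Nontrivial (Fin k) := Fin.nontrivial_iff_two_le.2 hk
    obtain ⟨j, hj⟩ := exists_ne i
    have hne : g i ≠ 0 := by
      rw [hg, Ne, Finset.gcd_eq_zero_iff]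
      exact fun h => hl j (h j (by simp [hj]))
    have hnonneg : 0 ≤ g i := by
      rw [hg, ← Finset.normalize_gcd]
      exact Int.nonneg_of_normalize_eq_self (normalize_idem _)
    omega
  have hdisj : ∀ r ∈ Fintype.piFinset (fun i => Finset.Ico (0 : ℤ) (g i)),
      ∀ r' ∈ Fintype.piFinset (fun i => Finset.Ico (0 : ℤ) (g i)), r ≠ r' →
        Disjoint (∑ i, (B i (r i)).image (fun a => l i * a))
          (∑ i, (B i (r' i)).image (fun a => l i * a)) := by
    intro r _ r' _ hne
    rw [Finset.disjoint_left]
    intro x hx hx'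
    obtain ⟨f, hf, hfx⟩ := (mem_sum_image_mul l _ x).1 hx
    obtain ⟨f', hf', hfx'⟩ := (mem_sum_image_mul l _ x).1 hx'
    apply hne
    funext i
    have h1 := hf i
    have h2 := hf' i
    rw [hB, Finset.mem_filter] at h1 h2
    rw [← h1.2, ← h2.2]
    exact Int.emod_eq_emod_iff_emod_sub_eq_zero.2
      (Int.emod_eq_zero_of_dvd (hg i ▸ dvd_sub_of_sum_mul_eq hcop (hfx.trans hfx'.symm) i))
  refine ⟨hdisj, ?_⟩
  rw [← Finset.card_biUnion hdisj]
  congr 1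
  ext x
  simp only [Finset.mem_biUnion, mem_sum_image_mul]
  constructor
  · rintro ⟨f, hf, hfx⟩
    refine ⟨fun i => f i % g i, ?_, f, fun i => ?_, hfx⟩
    · simp only [Fintype.mem_piFinset, Finset.mem_Ico]
      exact fun i => ⟨Int.emod_nonneg _ (hgpos i).ne', Int.emod_lt_of_pos _ (hgpos i)⟩
    · rw [hB, Finset.mem_filter]
      exact ⟨hf i, rfl⟩
  · rintro ⟨r, _, f, hf, hfx⟩
    refine ⟨f, fun i => ?_, hfx⟩
    have h := hf i
    rw [hB, Finset.mem_filter] at h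
    exact h.1
end

section
/- Let k ≥ 2 and let λ1, ..., λk be coprime nonzero integers; for each 1 ≤ i ≤ k let g_i = gcd(λ1, ..., λ_{i−1}, λ_{i+1}, ..., λk) and let s_i = |λ1| + ... + |λ_{i−1}| + |λ_{i+1}| + ... + |λk|. Suppose that for each 1 ≤ i ≤ k there is a constant C_i ≥ 0 such that for every finite nonempty set B ⊂ ℤ, |(λ1/g_i)·B + ... + (λ_{i−1}/g_i)·B + (λ_{i+1}/g_i)·B + ... + (λk/g_i)·B| ≥ (s_i/g_i)·|B| − C_i. Let C' = g_1·C_1 + ... + g_k·C_k. If A is a finite nonempty subset of ℤ that is fully distributed mod g_i for every 1 ≤ i ≤ k, then |λ1·A + ... + λk·A| ≥ (|λ1| + ... + |λk|)·|A| − (C' + |λ1 ⋯ λk|). -/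
open Pointwise

/-!
Write `gᵢ` for the gcd of the `λⱼ` with `j ≠ i`, and split `A` into its residue classes
`A_{i,t} = {a ∈ A : a ≡ t mod gᵢ}`, all of them nonempty because `A` is fully distributed.
For a tuple of residues `r = (r₁, …, r_k)` put `Z_r = λ₁·A_{1,r₁} + … + λ_k·A_{k,r_k}`.
Modulo `gᵢ` an element of `Z_r` is congruent to `λᵢ rᵢ`, and `λᵢ` is invertible modulo `gᵢ`, so the
`Z_r` are disjoint subsets of `S = λ₁·A + … + λ_k·A` (`sum_card_classes_le`).

The size of each `Z_r` is bounded below by the superadditivity inequality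
`(k - 1)|X₁ + … + X_k| ≥ ∑ᵢ |∑_{j ≠ i} Xⱼ| - 1` for sumsets of integers, due to Gyarmati, Matolcsi
and Ruzsa (`sum_card_erase_le`). For fixed `i` and fixed `rᵢ`, the sets `∑_{j ≠ i} λⱼ·A_{j,rⱼ}` cover
`Sᵢ = ∑_{j ≠ i} λⱼ·A` (`mul_card_le_sum_card_classes`), so summing over `r` gives
`(k - 1)|S| ≥ ∑ᵢ gᵢ|Sᵢ| - ∏ᵢ gᵢ`. The hypothesis on sums of `k - 1` dilates, applied to `A` itself,
gives `gᵢ|Sᵢ| ≥ sᵢ|A| - gᵢCᵢ`; finally `∑ᵢ sᵢ = (k - 1) ∑ᵢ |λᵢ|`, and `∏ᵢ gᵢ ≤ |λ₁⋯λ_k|` since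
`gᵢ` divides `λ_{i+1}` (indices read cyclically).
-/

lemma mem_sum_finset_iff {ι : Type*} (I : Finset ι) (X : ι → Finset ℤ) (x : ℤ) :
    x ∈ ∑ i ∈ I, X i ↔ ∃ a : ι → ℤ, (∀ i ∈ I, a i ∈ X i) ∧ ∑ i ∈ I, a i = x := by
  classical
  rw [← Finset.mem_coe, Finset.coe_sum, Set.mem_finsetSum]
  constructor
  · rintro ⟨a, ha, h⟩
    exact ⟨a, fun i hi => by simpa using ha hi, h⟩
  · rintro ⟨a, ha, h⟩
    exact ⟨a, fun {i} hi => by simpa using ha i hi, h⟩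

lemma add_mem_sum_of_mem_erase {ι : Type*} [DecidableEq ι] [Fintype ι] (X : ι → Finset ℤ) (i : ι)
    {x c : ℤ} (hx : x ∈ ∑ j ∈ Finset.univ.erase i, X j) (hc : c ∈ X i) : x + c ∈ ∑ j, X j := by
  rw [← Finset.sum_erase_add _ _ (Finset.mem_univ i)]
  exact Finset.add_mem_add hx hc

/-- Superadditivity of sumset cardinalities (Gyarmati, Matolcsi, Ruzsa):
`(n - 1)|X₁ + … + Xₙ| ≥ ∑ᵢ |∑_{j ≠ i} Xⱼ| - 1` with `n = m + 1`. Each `Sᵢ = ∑_{j ≠ i} Xⱼ` is cut at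
the threshold `Tᵢ = ∑_{j < i} max Xⱼ + ∑_{j > i} min Xⱼ`. The upper part of `Sᵢ`, shifted by
`max Xᵢ`, and the lower part of `Sᵢ₊₁`, shifted by `min Xᵢ₊₁`, lie in the full sumset on opposite
sides of `Tᵢ + max Xᵢ = Tᵢ₊₁ + min Xᵢ₊₁`. Only the lower part of the first `Sᵢ`, a single point, and
the upper part of the last, which is empty, are not counted. -/
lemma sum_card_erase_le_s5 (m : ℕ) (X : Fin (m + 1) → Finset ℤ) (hX : ∀ i, (X i).Nonempty) :
    ∑ i, (∑ j ∈ Finset.univ.erase i, X j).card ≤ m * (∑ j, X j).card + 1 := by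
  set M : Fin (m + 1) → ℤ := fun i => (X i).max' (hX i) with hM
  set μ : Fin (m + 1) → ℤ := fun i => (X i).min' (hX i) with hμ
  have hMm : ∀ i, M i ∈ X i := fun i => Finset.max'_mem _ _
  have hμm : ∀ i, μ i ∈ X i := fun i => Finset.min'_mem _ _
  have hMle : ∀ i, ∀ x ∈ X i, x ≤ M i := fun i x hx => Finset.le_max' _ _ hx
  have hμle : ∀ i, ∀ x ∈ X i, μ i ≤ x := fun i x hx => Finset.min'_le _ _ hx
  set T : Fin (m + 1) → ℤ :=
    fun i => ∑ j ∈ Finset.univ.erase i, if j < i then M j else μ j with hT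
  set S : Fin (m + 1) → Finset ℤ := fun i => ∑ j ∈ Finset.univ.erase i, X j with hS
  set lo : Fin (m + 1) → Finset ℤ := fun i => (S i).filter (· ≤ T i) with hlo
  set hi : Fin (m + 1) → Finset ℤ := fun i => (S i).filter (¬ · ≤ T i) with hhi
  have hsplit : ∀ i, (S i).card = (lo i).card + (hi i).card := fun i =>
    (Finset.card_filter_add_card_filter_not _).symm
  have hthr : ∀ i : Fin m, T i.castSucc + M i.castSucc = T i.succ + μ i.succ := by
    intro i
    have h1 : T i.castSucc + M i.castSucc = ∑ j, if j ≤ i.castSucc then M j else μ j := by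
      rw [← Finset.sum_erase_add _ _ (Finset.mem_univ i.castSucc), if_pos le_rfl, hT]
      congr 1
      refine Finset.sum_congr rfl fun j hj => ?_
      have : j < i.castSucc ↔ j ≤ i.castSucc :=
        ⟨le_of_lt, fun h => lt_of_le_of_ne h (Finset.ne_of_mem_erase hj)⟩
      simp only [this]
    have h2 : T i.succ + μ i.succ = ∑ j, if j < i.succ then M j else μ j := by
      rw [← Finset.sum_erase_add _ _ (Finset.mem_univ i.succ), if_neg (lt_irrefl _)]
    rw [h1, h2]
    refine Finset.sum_congr rfl fun j _ => ?_
    have : j ≤ i.castSucc ↔ j < i.succ := Fin.le_castSucc_iff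
    simp only [this]
  have hstep : ∀ i : Fin m, (hi i.castSucc).card + (lo i.succ).card ≤ (∑ j, X j).card := by
    intro i
    rw [← Finset.card_image_of_injective (hi i.castSucc) (add_left_injective (M i.castSucc)),
      ← Finset.card_image_of_injective (lo i.succ) (add_left_injective (μ i.succ)),
      ← Finset.card_union_of_disjoint]
    · refine Finset.card_le_card (Finset.union_subset ?_ ?_)
      · intro y hy
        obtain ⟨x, hx, rfl⟩ := Finset.mem_image.1 hy
        exact add_mem_sum_of_mem_erase X _ (Finset.mem_filter.1 hx).1 (hMm _)
      · intro y hy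
        obtain ⟨x, hx, rfl⟩ := Finset.mem_image.1 hy
        exact add_mem_sum_of_mem_erase X _ (Finset.mem_filter.1 hx).1 (hμm _)
    · rw [Finset.disjoint_left]
      intro y hy hy'
      obtain ⟨x, hx, rfl⟩ := Finset.mem_image.1 hy
      obtain ⟨x', hx', h⟩ := Finset.mem_image.1 hy'
      have h1 := (Finset.mem_filter.1 hx).2
      have h2 := (Finset.mem_filter.1 hx').2
      have h3 := hthr i
      omega
  have hfirst : (lo 0).card ≤ 1 := by
    refine (Finset.card_le_card (t := {T 0}) fun x hx => ?_).trans_eq (Finset.card_singleton _)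
    obtain ⟨hx1, hx2⟩ := Finset.mem_filter.1 hx
    obtain ⟨a, ha, rfl⟩ := (mem_sum_finset_iff _ _ _).1 hx1
    refine Finset.mem_singleton.2 (le_antisymm hx2 (Finset.sum_le_sum fun j hj => ?_))
    rw [if_neg (Fin.not_lt_zero j)]
    exact hμle j _ (ha j hj)
  have hlast : (hi (Fin.last m)).card = 0 := by
    refine Finset.card_eq_zero.2 (Finset.filter_eq_empty_iff.2 fun x hx => not_not.2 ?_)
    obtain ⟨a, ha, rfl⟩ := (mem_sum_finset_iff _ _ _).1 hx
    refine Finset.sum_le_sum fun j hj => ?_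
    rw [if_pos (lt_of_le_of_ne (Fin.le_last j) (Finset.ne_of_mem_erase hj))]
    exact hMle j _ (ha j hj)
  have hsum := Finset.sum_le_sum fun (i : Fin m) (_ : i ∈ Finset.univ) => hstep i
  rw [Finset.sum_add_distrib, Finset.sum_const, Finset.card_univ, Fintype.card_fin,
    smul_eq_mul] at hsum
  calc ∑ i, (S i).card = ∑ i, (lo i).card + ∑ i, (hi i).card := by
        rw [← Finset.sum_add_distrib]; exact Finset.sum_congr rfl fun i _ => hsplit i
    _ ≤ _ := by
        rw [Fin.sum_univ_succ (fun i => (lo i).card), Fin.sum_univ_castSucc (fun i => (hi i).card)]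
        omega

/-- The dilate by `l i` of the part of `A` congruent to `t` modulo `g i`. -/
noncomputable def dilateClass {k : ℕ} (l g : Fin k → ℤ) (A : Finset ℤ) (i : Fin k) (t : ℤ) : Finset ℤ :=
  (A.filter (fun a => a % g i = t)).image (fun a => l i * a)

/-- The tuples of residues `r`, the `i`-th one reduced modulo `g i`. -/
noncomputable def residueTuples {k : ℕ} (g : Fin k → ℤ) : Finset (Fin k → ℤ) :=
  Fintype.piFinset fun i => Finset.Ico 0 (g i)

/-- The sumsets of the classes belonging to distinct residue tuples are disjoint: modulo `g i` such
a sum only sees the `i`-th summand, from which the residue is recovered as `l i` is invertible. -/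
lemma sum_card_classes_le {k : ℕ} (l g : Fin k → ℤ) (A : Finset ℤ)
    (hdvd : ∀ i j, j ≠ i → g i ∣ l j) (hcop : ∀ i, IsCoprime (g i) (l i)) :
    ∑ r ∈ residueTuples g, (∑ i, dilateClass l g A i (r i)).card ≤
      (∑ i, A.image (fun a => l i * a)).card := by
  rw [← Finset.card_biUnion]
  · refine Finset.card_le_card (Finset.biUnion_subset.2 fun r _ x hx => ?_)
    obtain ⟨a, ha, rfl⟩ := (mem_sum_finset_iff _ _ _).1 hx
    exact (mem_sum_finset_iff _ _ _).2
      ⟨a, fun i hi => Finset.image_subset_image (Finset.filter_subset _ _) (ha i hi), rfl⟩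
  · intro r _ r' _ hne
    rw [Function.onFun_apply, Finset.disjoint_left]
    intro x hx hx'
    apply hne
    obtain ⟨a, ha, rfl⟩ := (mem_sum_finset_iff _ _ _).1 hx
    obtain ⟨b, hb, hab⟩ := (mem_sum_finset_iff _ _ _).1 hx'
    funext i
    have hmem : ∀ j, g i ∣ b j - a j := by
      have hother : ∀ j, j ≠ i → g i ∣ b j - a j := by
        intro j hj
        obtain ⟨u, _, hu⟩ := Finset.mem_image.1 (ha j (Finset.mem_univ j))
        obtain ⟨v, _, hv⟩ := Finset.mem_image.1 (hb j (Finset.mem_univ j))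
        rw [← hu, ← hv, ← mul_sub]
        exact (hdvd i j hj).mul_right _
      intro j
      by_cases hj : j = i
      · subst hj
        have h0 : ∑ i, (b i - a i) = 0 := by rw [Finset.sum_sub_distrib, hab, sub_self]
        rw [← Finset.sum_erase_add _ _ (Finset.mem_univ j)] at h0
        rw [← dvd_add_right (Finset.dvd_sum fun i hi => hother i (Finset.ne_of_mem_erase hi)), h0]
        exact dvd_zero _
      · exact hother j hj
    obtain ⟨u, hu, hua⟩ := Finset.mem_image.1 (ha i (Finset.mem_univ i))
    obtain ⟨v, hv, hvb⟩ := Finset.mem_image.1 (hb i (Finset.mem_univ i))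
    have h := hmem i
    rw [← hua, ← hvb, ← mul_sub] at h
    rw [← (Finset.mem_filter.1 hu).2, ← (Finset.mem_filter.1 hv).2]
    exact Int.modEq_iff_dvd.2 ((hcop i).dvd_of_dvd_mul_left h)

/-- Each of the `g i` choices of the `i`-th residue contributes a cover of the sumset over
`j ≠ i` by sumsets of classes. -/
lemma mul_card_le_sum_card_classes {k : ℕ} (l g : Fin k → ℤ) (A : Finset ℤ)
    (hg : ∀ i, 0 < g i) (i : Fin k) :
    (g i).toNat * (∑ j ∈ Finset.univ.erase i, A.image (fun a => l j * a)).card ≤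
      ∑ r ∈ residueTuples g, (∑ j ∈ Finset.univ.erase i, dilateClass l g A j (r j)).card := by
  have hcard : (Finset.Ico 0 (g i)).card = (g i).toNat := by simp
  rw [← hcard, ← Finset.card_product, ← Finset.card_sigma]
  refine Finset.card_le_card_of_surjOn (fun p => (p.1 i, p.2)) ?_
  rintro ⟨t, x⟩ htx
  obtain ⟨ht, hx⟩ := Finset.mem_product.1 (Finset.mem_coe.1 htx)
  obtain ⟨a, ha, rfl⟩ := (mem_sum_finset_iff _ _ _).1 hx
  choose! b hb hba using fun j hj => Finset.mem_image.1 (ha j hj)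
  refine ⟨⟨fun j => if j = i then t else b j % g j, ∑ j ∈ Finset.univ.erase i, a j⟩, ?_, by simp⟩
  refine Finset.mem_coe.2 (Finset.mem_sigma.2 ⟨Fintype.mem_piFinset.2 fun j => ?_, ?_⟩)
  · by_cases hj : j = i
    · subst hj; simpa using ht
    · simp [hj, Int.emod_nonneg _ (hg j).ne', Int.emod_lt_of_pos _ (hg j)]
  · refine (mem_sum_finset_iff _ _ _).2 ⟨a, fun j hj => Finset.mem_image.2 ⟨b j, ?_, hba j hj⟩, rfl⟩
    simp [hb j hj, Finset.ne_of_mem_erase hj]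

/-- Dividing all coefficients by a common divisor `d` does not increase the sumset: multiplication
by `d` maps one sumset injectively into the other. -/
lemma card_sum_div_le {ι : Type*} (I : Finset ι) (l : ι → ℤ) (d : ℤ) (hd : d ≠ 0)
    (hdvd : ∀ j ∈ I, d ∣ l j) (A : Finset ℤ) :
    (∑ j ∈ I, A.image (fun b => (l j / d) * b)).card ≤
      (∑ j ∈ I, A.image (fun a => l j * a)).card := by
  refine Finset.card_le_card_of_injOn (fun x => d * x) (fun x hx => ?_)
    (mul_right_injective₀ hd).injOn
  obtain ⟨a, ha, rfl⟩ := (mem_sum_finset_iff _ _ _).1 (Finset.mem_coe.1 hx)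
  refine Finset.mem_coe.2 ((mem_sum_finset_iff _ _ _).2
    ⟨fun j => d * a j, fun j hj => ?_, (Finset.mul_sum _ _ _).symm⟩)
  obtain ⟨b, hb, hba⟩ := Finset.mem_image.1 (ha j hj)
  refine Finset.mem_image.2 ⟨b, hb, ?_⟩
  change _ = d * a j
  rw [← hba, ← mul_assoc, Int.mul_ediv_cancel' (hdvd j hj)]

/-- If `A` is fully distributed mod `gᵢ = gcd(λ₁, …, λ̂ᵢ, …, λ_k)` for every `i`, and
the sums of `k−1` dilates with coefficients `λⱼ/gᵢ` (`j ≠ i`) satisfy the expected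
lower bound with constants `Cᵢ ≥ 0`, then
`|λ₁·A + … + λ_k·A| ≥ (|λ₁| + … + |λ_k|)·|A| − (C' + |λ₁⋯λ_k|)`
with `C' = g₁C₁ + … + g_kC_k`. -/
theorem sum_dilates_of_fully_distributed (k : ℕ) (hk : 2 ≤ k)
    (l : Fin k → ℤ) (hl : ∀ i, l i ≠ 0) (hcop : Finset.univ.gcd l = 1)
    (g : Fin k → ℤ) (hg : ∀ i, g i = (Finset.univ.erase i).gcd l)
    (s : Fin k → ℤ) (hs : ∀ i, s i = ∑ j ∈ Finset.univ.erase i, |l j|)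
    (C : Fin k → ℚ) (hC : ∀ i, 0 ≤ C i)
    (hind : ∀ i, ∀ B : Finset ℤ, B.Nonempty →
      ((s i : ℚ) / (g i : ℚ)) * B.card - C i ≤
        ((∑ j ∈ Finset.univ.erase i, B.image (fun b => (l j / g i) * b)).card : ℚ))
    (A : Finset ℤ) (hA : A.Nonempty)
    (hFD : ∀ i, ∀ r : ℤ, ∃ a ∈ A, a % g i = r % g i) :
    (∑ i, (|l i| : ℚ)) * A.card -
        ((∑ i, (g i : ℚ) * C i) + ((|∏ i, l i| : ℤ) : ℚ))
      ≤ ((∑ i, A.image (fun a => l i * a)).card : ℚ) := by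
  obtain ⟨m, rfl⟩ : ∃ m, k = m + 1 := ⟨k - 1, by omega⟩
  have hm : 1 ≤ m := by omega
  have hdvd : ∀ i j, j ≠ i → g i ∣ l j := fun i j hj => by
    rw [hg]; exact Finset.gcd_dvd (Finset.mem_erase.2 ⟨hj, Finset.mem_univ j⟩)
  -- `m ≥ 1` guarantees a cyclic successor different from `i`.
  have hsucc : ∀ i : Fin (m + 1), i + 1 ≠ i := fun i h => by
    have := Fin.one_eq_zero_iff.1 (add_eq_left.1 h)
    omega
  have hgpos : ∀ i, 0 < g i := fun i => by
    have h0 : g i ≠ 0 := fun h => hl (i + 1) (zero_dvd_iff.1 (h ▸ hdvd i _ (hsucc i)))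
    have h1 : 0 ≤ g i := by
      rw [hg, ← Finset.normalize_gcd, ← Int.abs_eq_normalize]; exact abs_nonneg _
    omega
  have hcopi : ∀ i, IsCoprime (g i) (l i) := fun i => by
    rw [isCoprime_comm, ← gcd_isUnit_iff, hg, ← Finset.gcd_insert,
      Finset.insert_erase (Finset.mem_univ i), hcop]
    exact isUnit_one
  have hgprod : ∏ i, g i ≤ |∏ i, l i| := by
    rw [Finset.abs_prod, ← Equiv.prod_comp (Equiv.addRight 1) (fun i => |l i|)]
    refine Finset.prod_le_prod (fun i _ => (hgpos i).le) fun i _ => ?_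
    exact Int.le_of_dvd (abs_pos.2 (hl _)) ((dvd_abs _ _).2 (hdvd i _ (hsucc i)))
  set N := (∑ i, A.image (fun a => l i * a)).card with hN
  set t : Fin (m + 1) → ℕ :=
    fun i => (∑ j ∈ Finset.univ.erase i, A.image (fun a => l j * a)).card with ht
  have hcardR : ((residueTuples g).card : ℤ) = ∏ i, g i := by
    rw [residueTuples, Fintype.card_piFinset, Nat.cast_prod]
    refine Finset.prod_congr rfl fun i _ => ?_
    simp [(hgpos i).le]
  have hmain : ∑ i, g i * t i ≤ m * N + ∏ i, g i := by
    have h1 : ∑ i, (g i).toNat * t i ≤ m * N + (residueTuples g).card :=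
      calc ∑ i, (g i).toNat * t i
          ≤ ∑ i, ∑ r ∈ residueTuples g,
              (∑ j ∈ Finset.univ.erase i, dilateClass l g A j (r j)).card :=
            Finset.sum_le_sum fun i _ => mul_card_le_sum_card_classes l g A hgpos i
        _ = ∑ r ∈ residueTuples g, ∑ i,
              (∑ j ∈ Finset.univ.erase i, dilateClass l g A j (r j)).card := Finset.sum_comm
        _ ≤ ∑ r ∈ residueTuples g, (m * (∑ j, dilateClass l g A j (r j)).card + 1) := by
            refine Finset.sum_le_sum fun r hr => sum_card_erase_le_s5 m _ fun i => ?_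
            obtain ⟨a, ha, har⟩ := hFD i (r i)
            have hri := Finset.mem_Ico.1 (Fintype.mem_piFinset.1 hr i)
            rw [Int.emod_eq_of_lt hri.1 hri.2] at har
            exact ⟨l i * a, Finset.mem_image_of_mem _ (Finset.mem_filter.2 ⟨ha, har⟩)⟩
        _ = m * ∑ r ∈ residueTuples g, (∑ j, dilateClass l g A j (r j)).card
              + (residueTuples g).card := by
            rw [Finset.sum_add_distrib, ← Finset.mul_sum, Finset.sum_const, smul_eq_mul, mul_one]
        _ ≤ m * N + (residueTuples g).card := by
            have := sum_card_classes_le l g A hdvd hcopi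
            gcongr
    have h2 : ((∑ i, (g i).toNat * t i : ℕ) : ℤ) = ∑ i, g i * t i := by
      push_cast
      exact Finset.sum_congr rfl fun i _ => by rw [Int.toNat_of_nonneg (hgpos i).le]
    rw [← h2, ← hcardR]
    exact_mod_cast h1
  have hlow : ∀ i, (s i : ℚ) * A.card - g i * C i ≤ g i * t i := fun i => by
    have hgi : (0 : ℚ) < g i := by exact_mod_cast hgpos i
    have h1 := (hind i A hA).trans (Nat.cast_le.2 (card_sum_div_le _ l (g i) (hgpos i).ne'
      (fun j hj => hdvd i j (Finset.ne_of_mem_erase hj)) A))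
    calc (s i : ℚ) * A.card - g i * C i = g i * (s i / g i * A.card - C i) := by field_simp
      _ ≤ g i * t i := mul_le_mul_of_nonneg_left h1 hgi.le
  have hssum : (∑ i, (s i : ℚ)) = m * ∑ i, (|l i| : ℚ) := by
    have h : ∀ i, (s i : ℚ) = ∑ j, (|l j| : ℚ) - |l i| := fun i => by
      rw [hs, ← Finset.sum_erase_add _ _ (Finset.mem_univ i)]; push_cast; ring
    simp only [h]
    rw [Finset.sum_sub_distrib, Finset.sum_const, Finset.card_univ, Fintype.card_fin]
    simp; ring
  have hfin : m * ((∑ i, (|l i| : ℚ)) * A.card) - ∑ i, (g i : ℚ) * C i ≤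
      m * N + ((|∏ i, l i| : ℤ) : ℚ) := by
    have h1 := Finset.sum_le_sum fun i (_ : i ∈ Finset.univ) => hlow i
    rw [Finset.sum_sub_distrib, ← Finset.sum_mul, hssum] at h1
    have h2 : (∑ i, (g i : ℚ) * t i) ≤ m * N + ((|∏ i, l i| : ℤ) : ℚ) := by
      exact_mod_cast hmain.trans (add_le_add_right hgprod _)
    linarith
  have hmQ : (1 : ℚ) ≤ m := by exact_mod_cast hm
  have hCsum : 0 ≤ ∑ i, (g i : ℚ) * C i :=
    Finset.sum_nonneg fun i _ => mul_nonneg (by exact_mod_cast (hgpos i).le) (hC i)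
  have hP : (0 : ℚ) ≤ ((|∏ i, l i| : ℤ) : ℚ) := by exact_mod_cast abs_nonneg _
  refine le_of_mul_le_mul_left ?_ (zero_lt_one.trans_le hmQ)
  nlinarith [mul_nonneg (sub_nonneg.2 hmQ) (add_nonneg hCsum hP)]
end

section
/- Let k ≥ 2 and let λ1, ..., λk be coprime nonzero integers; for each 1 ≤ i ≤ k let g_i = gcd(λ1, ..., λ_{i−1}, λ_{i+1}, ..., λk). Let A be a finite reduced subset of the integers, and for each i partition A into its nonempty residue classes mod g_i: A = ⋃_{j=1}^{m_i} A_{ij} with A_{ij} = a_{ij} + g_i·A'_{ij} and 0 ≤ a_{ij} < g_i. Fix 1 ≤ i ≤ k and 1 ≤ j ≤ m_i. Then either A'_{ij} is fully distributed mod g_i, or |λ1·A + ... + λ_{i−1}·A + λ_i·A_{ij} + λ_{i+1}·A + ... + λk·A| ≥ |λ1·A_{ij} + ... + λk·A_{ij}| + min_{1 ≤ w ≤ m_i} |A_{iw}|. -/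
/-!
Fix `b₀ ∈ Aᵢⱼ` and write `g = gᵢ`. Since `g ∣ l m` for `m ≠ i` and all elements of `Aᵢⱼ` agree
mod `g`, every element of `∑ l m · Aᵢⱼ` is congruent mod `g²` to `l i * b' + ∑_{m ≠ i} l m * b₀`
for some `b' ∈ Aᵢⱼ`. So the classes mod `g²` met by that sumset form a translate of
`l i · Aᵢⱼ` mod `g²`.

The integers `n` such that translation by `n` maps `l i · Aᵢⱼ` into itself mod `g²` form a subgroup
of `ℤ` (`stab`). If it contains all `l j * (a - b₀)` with `j ≠ i` and `a ∈ A`, then, `A` being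
reduced, it contains `g` (`gcd_mem_of_forall_mul_sub_mem`); as `l i` is coprime to `g`, this forces
`A'ᵢⱼ` to be fully distributed mod `g`. Otherwise some translate by `l j * (a - b₀)` reaches a
class mod `g²` missed by `∑ l m · Aᵢⱼ`. Replacing `a` by any element of its class in `A` mod `g`
changes nothing mod `g²`, so the large sumset has at least as many extra elements as that class.
-/

open Pointwise

/-- The integers `n` such that translation by `n` maps `c · B` into itself modulo `q`.
Negation closure holds because `-n ≡ (q - 1) n` mod `q`, which needs `0 < q`. -/
def stab (B : Finset ℤ) (c q : ℤ) (hq : 0 < q) : AddSubgroup ℤ where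
  carrier := {n | ∀ b ∈ B, ∃ b' ∈ B, q ∣ c * b + n - c * b'}
  zero_mem' := fun b hb => ⟨b, hb, by simp⟩
  add_mem' := by
    intro x y hx hy b hb
    obtain ⟨b₁, hb₁, h₁⟩ := hx b hb
    obtain ⟨b₂, hb₂, h₂⟩ := hy b₁ hb₁
    refine ⟨b₂, hb₂, ?_⟩
    have h := dvd_add h₁ h₂
    ring_nf at h ⊢
    exact h
  neg_mem' := by
    intro x hx
    have key : ∀ n : ℕ, ∀ b ∈ B, ∃ b' ∈ B, q ∣ c * b + n * x - c * b' := by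
      intro n
      induction n with
      | zero => exact fun b hb => ⟨b, hb, by simp⟩
      | succ n ih =>
        intro b hb
        obtain ⟨b₁, hb₁, h₁⟩ := ih b hb
        obtain ⟨b₂, hb₂, h₂⟩ := hx b₁ hb₁
        refine ⟨b₂, hb₂, ?_⟩
        have h := dvd_add h₁ h₂
        push_cast
        ring_nf at h ⊢
        exact h
    intro b hb
    obtain ⟨b', hb', h⟩ := key (q - 1).toNat b hb
    refine ⟨b', hb', ?_⟩
    rw [Int.toNat_of_nonneg (by omega)] at h
    have h2 := dvd_sub h (dvd_mul_right q x)
    ring_nf at h2 ⊢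
    exact h2

theorem mem_stab {B : Finset ℤ} {c q : ℤ} {hq : 0 < q} {n : ℤ} :
    n ∈ stab B c q hq ↔ ∀ b ∈ B, ∃ b' ∈ B, q ∣ c * b + n - c * b' := Iff.rfl

theorem mem_finset_sum_iff {ι : Type*} (t : Finset ι) (F : ι → Finset ℤ) (a : ℤ) :
    a ∈ ∑ j ∈ t, F j ↔ ∃ (f : ι → ℤ) (_ : ∀ {j}, j ∈ t → f j ∈ F j), ∑ j ∈ t, f j = a := by
  rw [← Finset.mem_coe, Finset.coe_sum, Set.mem_finsetSum]
  rfl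

/-- The differences of elements of a reduced set `A` generate `ℤ`, so a subgroup containing
`l j * (a - b₀)` for all `a ∈ A` contains `l j`, and hence the gcd of the `l j`. -/
theorem gcd_mem_of_forall_mul_sub_mem {ι : Type*} (H : AddSubgroup ℤ) (s : Finset ι) (l : ι → ℤ)
    (A : Finset ℤ) (hA : Finset.gcd (A ×ˢ A) (fun p => p.1 - p.2) = 1) (b₀ : ℤ)
    (h : ∀ j ∈ s, ∀ a ∈ A, l j * (a - b₀) ∈ H) : s.gcd l ∈ H := by
  obtain ⟨d, rfl⟩ := Int.subgroup_cyclic H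
  simp only [← AddSubgroup.zmultiples_eq_closure, Int.mem_zmultiples_iff] at h ⊢
  refine Finset.dvd_gcd fun j hj => ?_
  have h1 : d ∣ Finset.gcd (A ×ˢ A) (fun p => l j * (p.1 - p.2)) := by
    refine Finset.dvd_gcd fun p hp => ?_
    rw [Finset.mem_product] at hp
    have := dvd_sub (h j hj _ hp.1) (h j hj _ hp.2)
    ring_nf at this ⊢
    exact this
  rw [Finset.gcd_mul_left, hA, mul_one] at h1
  exact (dvd_normalize_iff).1 h1

/-- Let `A ⊆ ℤ` be finite and reduced, `gᵢ = gcd(λ₁, …, λ̂ᵢ, …, λ_k)`, and let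
`Aᵢⱼ = {a ∈ A : a ≡ r (mod gᵢ)}` be a nonempty residue class with
`Aᵢⱼ = r + gᵢ·A'ᵢⱼ` (`0 ≤ r < gᵢ`). Then either `A'ᵢⱼ` is fully distributed mod `gᵢ`,
or `|λ₁·A + … + λᵢ·Aᵢⱼ + … + λ_k·A| ≥ |λ₁·Aᵢⱼ + … + λ_k·Aᵢⱼ| + min_w |A_{iw}|`,
the minimum being over the nonempty residue classes of `A` mod `gᵢ`. -/
theorem dilate_class_FD_or_growth (k : ℕ) (hk : 2 ≤ k)
    (l : Fin k → ℤ) (hl : ∀ i, l i ≠ 0) (hcop : Finset.univ.gcd l = 1)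
    (g : Fin k → ℤ) (hg : ∀ i, g i = (Finset.univ.erase i).gcd l)
    (A : Finset ℤ)
    (hred : 2 ≤ A.card ∧ Finset.gcd (A ×ˢ A) (fun p => p.1 - p.2) = 1)
    (i : Fin k) (r : ℤ) (hr : 0 ≤ r ∧ r < g i)
    (Aij : Finset ℤ) (hAij : Aij = A.filter (fun a => a % g i = r))
    (hne : Aij.Nonempty)
    (A' : Finset ℤ) (hA' : A' = Aij.image (fun a => (a - r) / g i)) :
    (∀ t : ℤ, ∃ a ∈ A', a % g i = t % g i) ∨
      (∑ j, Aij.image (fun a => l j * a)).card +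
          sInf {n : ℕ | ∃ s : ℤ, (A.filter (fun a => a % g i = s)).Nonempty ∧
            n = (A.filter (fun a => a % g i = s)).card} ≤
        (Aij.image (fun a => l i * a) +
          ∑ j ∈ Finset.univ.erase i, A.image (fun a => l j * a)).card := by
  have hgpos : 0 < g i := by omega
  have hq : 0 < g i * g i := mul_pos hgpos hgpos
  obtain ⟨b₀, hb₀⟩ := hne
  have hB : ∀ b, b ∈ Aij ↔ b ∈ A ∧ b % g i = r := fun b => by rw [hAij, Finset.mem_filter]
  have hgl : ∀ j ≠ i, g i ∣ l j := fun j hj => by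
    rw [hg i]; exact Finset.gcd_dvd (by simp [hj])
  have hprod : ∀ j ≠ i, ∀ x y, x % g i = y % g i → g i * g i ∣ l j * (x - y) :=
    fun j hj x y hxy => mul_dvd_mul (hgl j hj) (Int.ModEq.dvd (Int.ModEq.symm hxy))
  have hcopi : IsCoprime (g i) (l i) := by
    have h : Finset.univ.gcd l = gcd (l i) (g i) := by
      rw [hg i, ← Finset.gcd_insert, Finset.insert_erase (Finset.mem_univ i)]
    rw [isCoprime_comm, Int.isCoprime_iff_gcd_eq_one]
    rw [hcop, ← Int.coe_gcd] at h
    exact_mod_cast h.symm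
  by_cases hstab : ∀ j ∈ Finset.univ.erase i, ∀ a ∈ A, l j * (a - b₀) ∈ stab Aij (l i) _ hq
  · left
    have hgH := gcd_mem_of_forall_mul_sub_mem _ _ l A hred.2 b₀ hstab
    rw [← hg i] at hgH
    intro t
    obtain ⟨c, hc⟩ : ∃ c, b₀ = r + g i * c :=
      ⟨b₀ / g i, by rw [← ((hB b₀).1 hb₀).2, Int.emod_add_mul_ediv]⟩
    have h1 : l i * (t - c) * g i ∈ stab Aij (l i) _ hq := by
      simpa using AddSubgroup.zsmul_mem _ hgH (l i * (t - c))
    obtain ⟨b', hb', h⟩ := mem_stab.1 h1 b₀ hb₀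
    obtain ⟨c', hc'⟩ : ∃ c, b' = r + g i * c :=
      ⟨b' / g i, by rw [← ((hB b').1 hb').2, Int.emod_add_mul_ediv]⟩
    refine ⟨c', ?_, ?_⟩
    · rw [hA', Finset.mem_image]
      exact ⟨b', hb', by rw [hc']; simp [hgpos.ne']⟩
    · have h2 : g i * g i ∣ g i * (l i * (t - c')) := by
        convert h using 1
        rw [hc, hc']; ring
      have h3 := hcopi.dvd_of_dvd_mul_left (Int.dvd_of_mul_dvd_mul_left hgpos.ne' h2)
      exact Int.modEq_iff_dvd.2 h3
  · right
    push Not at hstab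
    obtain ⟨j, hj, a, ha, hns⟩ := hstab
    have hji : j ≠ i := Finset.ne_of_mem_erase hj
    rw [mem_stab] at hns
    push Not at hns
    obtain ⟨b, hb, hns⟩ := hns
    set C := A.filter (fun x => x % g i = a % g i) with hC
    -- For `x ∈ C`, `s x` is in the large sumset and in a class mod `g²` that the small one misses.
    let s : ℤ → ℤ := fun x => l i * b + (l j * x + ∑ m ∈ (Finset.univ.erase i).erase j, l m * b₀)
    have hs_inj : Function.Injective s := fun x y hxy => by
      have : l j * x = l j * y := by simpa [s] using hxy
      exact mul_left_cancel₀ (hl j) this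
    have hmin : sInf {n : ℕ | ∃ s : ℤ, (A.filter (fun a => a % g i = s)).Nonempty ∧
        n = (A.filter (fun a => a % g i = s)).card} ≤ (C.image s).card := by
      rw [Finset.card_image_of_injective _ hs_inj]
      exact Nat.sInf_le ⟨a % g i, ⟨a, by simp [ha]⟩, rfl⟩
    have hdisj : Disjoint (∑ m, Aij.image (fun x => l m * x)) (C.image s) := by
      rw [Finset.disjoint_left]
      intro d hd hd'
      obtain ⟨x, hx, rfl⟩ := Finset.mem_image.1 hd'
      rw [hC, Finset.mem_filter] at hx
      obtain ⟨f, hf, hsum⟩ := (mem_finset_sum_iff _ _ _).1 hd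
      have hf' : ∀ m, ∃ y ∈ Aij, l m * y = f m := fun m =>
        Finset.mem_image.1 (hf (Finset.mem_univ m))
      choose y hy hyf using hf'
      refine hns (y i) (hy i) ?_
      have e1 : g i * g i ∣ ∑ m ∈ Finset.univ.erase i, l m * (y m - b₀) :=
        Finset.dvd_sum fun m hm => hprod m (Finset.ne_of_mem_erase hm) _ _
          (((hB _).1 (hy m)).2.trans ((hB _).1 hb₀).2.symm)
      have e2 := hprod j hji _ _ hx.2
      have e3 : ∑ m, f m = l i * y i + ∑ m ∈ Finset.univ.erase i, l m * y m := by
        rw [← Finset.add_sum_erase _ _ (Finset.mem_univ i)]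
        simp only [hyf]
      have e4 : ∑ m ∈ Finset.univ.erase i, l m * b₀
          = l j * b₀ + ∑ m ∈ (Finset.univ.erase i).erase j, l m * b₀ :=
        (Finset.add_sum_erase _ _ hj).symm
      have e5 := dvd_sub e1 e2
      simp only [mul_sub, Finset.sum_sub_distrib] at e5
      simp only [s] at hsum
      refine (congrArg (g i * g i ∣ ·) ?_).mp e5
      linear_combination hsum - e3 - e4
    have hsub : (∑ m, Aij.image (fun x => l m * x)) ∪ C.image s ⊆
        Aij.image (fun a => l i * a) +
          ∑ j ∈ Finset.univ.erase i, A.image (fun a => l j * a) := by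
      refine Finset.union_subset ?_ ?_
      · rw [← Finset.add_sum_erase _ _ (Finset.mem_univ i)]
        refine Finset.add_subset_add_left ?_
        intro d hd
        rw [mem_finset_sum_iff] at hd ⊢
        obtain ⟨f, hf, hsum⟩ := hd
        refine ⟨f, fun hm => ?_, hsum⟩
        exact Finset.image_subset_image (fun x hx => ((hB x).1 hx).1) (hf hm)
      · intro d hd
        obtain ⟨x, hx, rfl⟩ := Finset.mem_image.1 hd
        rw [hC, Finset.mem_filter] at hx
        refine Finset.add_mem_add (Finset.mem_image_of_mem _ hb) ?_
        rw [← Finset.add_sum_erase _ _ hj]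
        refine Finset.add_mem_add (Finset.mem_image_of_mem _ hx.1) ?_
        exact (mem_finset_sum_iff _ _ _).2 ⟨fun m => l m * b₀,
          fun _ => Finset.mem_image_of_mem _ ((hB b₀).1 hb₀).1, rfl⟩
    calc _ ≤ _ := Nat.add_le_add_left hmin _
      _ = _ := (Finset.card_union_of_disjoint hdisj).symm
      _ ≤ _ := Finset.card_le_card hsub
end

section
/- Let k ≥ 2 and let λ1, ..., λk be coprime nonzero integers; for each 1 ≤ i ≤ k let g_i = gcd(λ1, ..., λ_{i−1}, λ_{i+1}, ..., λk), and let p = g_1·g_2 ⋯ g_k. Let A be a finite reduced subset of ℤ. For each i partition A into its nonempty residue classes mod g_i: A = ⋃_{j=1}^{m_i} A_{ij} with A_{ij} = a_{ij} + g_i·A'_{ij}, 0 ≤ a_{ij} < g_i; also partition A into its nonempty residue classes mod p: A = ⋃_{e=1}^{m} P_e with P_e = p_e + p·P'_e, 0 ≤ p_e < p. Fix 1 ≤ e ≤ m and for each i let e_i ∈ {1, ..., m_i} be the index with p_e ≡ a_{i e_i} (mod g_i), so that P_e ⊂ A_{i e_i}. Suppose for every 1 ≤ i ≤ k that A'_{i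 e_i} is fully distributed mod g_i. Then either P'_e is fully distributed mod g_i for all 1 ≤ i ≤ k, or |λ1·A_{1 e_1} + λ2·A_{2 e_2} + ... + λk·A_{k e_k}| ≥ |λ1·P_e + ... + λk·P_e| + |P_e|. -/
open Pointwise

/-!
Write `q_j = p / g_j`. The `g_i` are pairwise coprime, `g_j ∣ λ_i` for `i ≠ j`, and `g_j` is coprime
to `λ_j` and to `q_j`. Suppose `P'_e` misses the class `r` mod `g_j`. Modulo `p * g_j`, an element
`∑ λ_i y_i` of `∑ λ_i · P_e` depends only on `y_j`, so it avoids the residue that `y_j = t + p * r`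
would give. Since `A'_j` is fully distributed mod `g_j`, there is `a₀ ∈ A_j` with
`a₀ ≡ t + p * r` mod `g_j ^ 2`. Fix some `i ≠ j`, use `a₀` in coordinate `j`, let coordinate `i` range
over `P_e`, and put a fixed element of `P_e` in the remaining coordinates: this gives `|P_e|` distinct
elements of `∑ λ_i · A_i` outside `∑ λ_i · P_e`, as a coincidence would force an element of `P'_e`
congruent to `r`.
-/

theorem mem_sum_dilates_iff {k : ℕ} (l : Fin k → ℤ) (B : Fin k → Finset ℤ) (z : ℤ) :
    z ∈ ∑ i, (B i).image (fun a => l i * a) ↔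
      ∃ y : Fin k → ℤ, (∀ i, y i ∈ B i) ∧ ∑ i, l i * y i = z := by
  rw [← Finset.mem_coe, Finset.coe_sum, Set.mem_finsetSum]
  constructor
  · rintro ⟨f, hf, rfl⟩
    have h : ∀ i, ∃ a ∈ B i, l i * a = f i := fun i => by
      simpa using hf (Finset.mem_univ i)
    choose y hy hy' using h
    exact ⟨y, hy, by simp [hy']⟩
  · rintro ⟨y, hy, rfl⟩
    exact ⟨fun i => l i * y i, fun {i} _ => Finset.mem_image_of_mem _ (hy i), rfl⟩

/-- Let `A ⊆ ℤ` be finite and reduced, `gᵢ = gcd(λ₁, …, λ̂ᵢ, …, λ_k)` and `p = g₁⋯g_k`.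
Let `P_e = {a ∈ A : a ≡ t (mod p)} = t + p·P'_e` be a nonempty residue class of `A`
mod `p` (`0 ≤ t < p`), and for each `i` let `A_{i eᵢ} = {a ∈ A : a ≡ t (mod gᵢ)}`
with `A_{i eᵢ} = (t mod gᵢ) + gᵢ·A'_{i eᵢ}`, so `P_e ⊆ A_{i eᵢ}`. If each `A'_{i eᵢ}`
is fully distributed mod `gᵢ`, then either `P'_e` is fully distributed mod `gᵢ` for
all `i`, or `|λ₁·A_{1 e₁} + … + λ_k·A_{k e_k}| ≥ |λ₁·P_e + … + λ_k·P_e| + |P_e|`. -/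
theorem subclass_FD_or_growth (k : ℕ) (hk : 2 ≤ k)
    (l : Fin k → ℤ) (hl : ∀ i, l i ≠ 0) (hcop : Finset.univ.gcd l = 1)
    (g : Fin k → ℤ) (hg : ∀ i, g i = (Finset.univ.erase i).gcd l)
    (p : ℤ) (hp : p = ∏ i, g i)
    (A : Finset ℤ)
    (hred : 2 ≤ A.card ∧ Finset.gcd (A ×ˢ A) (fun q => q.1 - q.2) = 1)
    (t : ℤ) (ht : 0 ≤ t ∧ t < p)
    (Pe : Finset ℤ) (hPe : Pe = A.filter (fun a => a % p = t))
    (hPne : Pe.Nonempty)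
    (Pe' : Finset ℤ) (hPe' : Pe' = Pe.image (fun a => (a - t) / p))
    (Ae : Fin k → Finset ℤ)
    (hAe : ∀ i, Ae i = A.filter (fun a => a % g i = t % g i))
    (Ae' : Fin k → Finset ℤ)
    (hAe' : ∀ i, Ae' i = (Ae i).image (fun a => (a - t % g i) / g i))
    (hFD : ∀ i, ∀ r : ℤ, ∃ a ∈ Ae' i, a % g i = r % g i) :
    (∀ i, ∀ r : ℤ, ∃ a ∈ Pe', a % g i = r % g i) ∨
      (∑ i, Pe.image (fun a => l i * a)).card + Pe.card ≤
        (∑ i, (Ae i).image (fun a => l i * a)).card := by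
  classical
  rw [or_iff_not_imp_left]
  intro hnot
  push Not at hnot
  obtain ⟨j, r, hr⟩ := hnot
  have hp0 : p ≠ 0 := by omega
  have hg0 : ∀ i, g i ≠ 0 := fun i h => hp0 (hp ▸ Finset.prod_eq_zero (Finset.mem_univ i) h)
  have hgp : ∀ i, g i ∣ p := fun i => hp ▸ Finset.dvd_prod_of_mem g (Finset.mem_univ i)
  have hgl : ∀ i m, m ≠ i → g i ∣ l m := fun i m hm => by
    rw [hg i]
    exact Finset.gcd_dvd (Finset.mem_erase.2 ⟨hm, Finset.mem_univ m⟩)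
  have hcl : IsCoprime (g j) (l j) := by
    rw [← Finset.insert_erase (Finset.mem_univ j), Finset.gcd_insert, ← hg j] at hcop
    rw [Int.isCoprime_iff_gcd_eq_one, Int.gcd_comm]
    exact_mod_cast (Int.coe_gcd (l j) (g j)).trans hcop
  -- Here `q` is `p / g j`.
  obtain ⟨q, hq, hcq⟩ : ∃ q, p = g j * q ∧ IsCoprime (g j) q := by
    refine ⟨∏ i ∈ Finset.univ.erase j, g i, ?_, ?_⟩
    · rw [hp, Finset.mul_prod_erase _ _ (Finset.mem_univ j)]
    · refine IsCoprime.prod_right fun i hi => ?_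
      exact hcl.of_isCoprime_of_dvd_right (hgl i j (Finset.ne_of_mem_erase hi).symm)
  have hPmod : ∀ a ∈ Pe, a ∈ A ∧ p ∣ a - t := fun a ha => by
    rw [hPe, Finset.mem_filter] at ha
    refine ⟨ha.1, ?_⟩
    rw [← ha.2]
    exact Int.dvd_self_sub_emod
  have hPA : ∀ i, Pe ⊆ Ae i := fun i a ha => by
    obtain ⟨h1, h2⟩ := hPmod a ha
    rw [hAe i, Finset.mem_filter]
    exact ⟨h1, Int.emod_eq_emod_iff_emod_sub_eq_zero.2
      (Int.emod_eq_zero_of_dvd ((hgp i).trans h2))⟩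
  obtain ⟨a₀, ha₀, ha₀r⟩ : ∃ a₀ ∈ Ae j, g j * g j ∣ a₀ - (t + p * r) := by
    -- The representative `t % g j` used to define `Ae'` differs from `t` by `g j * (t / g j)`.
    obtain ⟨b, hb, hbr⟩ := hFD j (q * r + t / g j)
    rw [hAe' j, Finset.mem_image] at hb
    obtain ⟨a, ha, rfl⟩ := hb
    refine ⟨a, ha, ?_⟩
    have hmod : g j ∣ a - t % g j := by
      rw [hAe j, Finset.mem_filter] at ha
      rw [← ha.2]
      exact Int.dvd_self_sub_emod
    obtain ⟨c, hc⟩ := hmod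
    rw [hc, Int.mul_ediv_cancel_left _ (hg0 j)] at hbr
    obtain ⟨d, hd⟩ := Int.ModEq.dvd (Int.ModEq.symm hbr)
    refine ⟨d, ?_⟩
    have := Int.emod_add_mul_ediv t (g j)
    rw [hq]
    linear_combination hc + g j * hd + this
  obtain ⟨i, hij⟩ : ∃ i : Fin k, i ≠ j := by
    have : Nontrivial (Fin k) := Fin.nontrivial_iff_two_le.2 hk
    exact exists_ne j
  obtain ⟨t₀, ht₀⟩ := hPne
  let f : ℤ → Fin k → ℤ := fun x => Function.update (Function.update (fun _ => t₀) i x) j a₀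
  have hfj : ∀ x, f x j = a₀ := fun x => by simp [f]
  have hfi : ∀ x, f x i = x := fun x => by simp [f, hij]
  have hfm : ∀ x m, m ≠ j → m ≠ i → f x m = t₀ := fun x m h1 h2 => by simp [f, h1, h2]
  have hfP : ∀ x ∈ Pe, ∀ m, m ≠ j → f x m ∈ Pe := fun x hx m hm => by
    by_cases h : m = i
    · rw [h, hfi]; exact hx
    · rw [hfm x m hm h]; exact ht₀
  let φ : ℤ → ℤ := fun x => ∑ m, l m * f x m
  have hinj : Function.Injective φ := fun x x' h => by
    have h0 : ∑ m, (l m * f x m - l m * f x' m) = 0 := by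
      rw [Finset.sum_sub_distrib]; exact sub_eq_zero.2 h
    rw [Finset.sum_eq_single i, hfi, hfi, ← mul_sub] at h0
    · exact sub_eq_zero.1 ((mul_eq_zero.1 h0).resolve_left (hl i))
    · intro m _ hm
      by_cases hmj : m = j
      · rw [hmj, hfj, hfj, sub_self]
      · rw [hfm x m hmj hm, hfm x' m hmj hm, sub_self]
    · exact fun h => absurd (Finset.mem_univ i) h
  have hdisj : Disjoint (∑ i, Pe.image (fun a => l i * a)) (Pe.image φ) := by
    rw [Finset.disjoint_left]
    intro z hz hz'
    obtain ⟨y, hy, rfl⟩ := (mem_sum_dilates_iff l (fun _ => Pe) z).1 hz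
    obtain ⟨x, hx, hxy⟩ := Finset.mem_image.1 hz'
    have h0 : ∑ m, l m * (f x m - y m) = 0 := by
      simp only [mul_sub, Finset.sum_sub_distrib]
      exact sub_eq_zero.2 hxy
    -- All terms except the `j`-th are divisible by `g j * p`, hence by `g j * g j`.
    have hj : g j * g j ∣ l j * (a₀ - y j) := by
      rw [← Finset.add_sum_erase _ _ (Finset.mem_univ j), hfj] at h0
      rw [eq_neg_of_add_eq_zero_left h0, dvd_neg]
      refine Finset.dvd_sum fun m hm => ?_
      have hmj := Finset.ne_of_mem_erase hm
      refine mul_dvd_mul (hgl j m hmj) ((hgp j).trans ?_)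
      have := dvd_sub (hPmod _ (hfP x hx m hmj)).2 (hPmod _ (hy m)).2
      rwa [sub_sub_sub_cancel_right] at this
    have hj' : g j * g j ∣ a₀ - y j := (hcl.mul_left hcl).dvd_of_dvd_mul_left hj
    obtain ⟨c, hc⟩ := (hPmod _ (hy j)).2
    have hcP : c ∈ Pe' := by
      rw [hPe', Finset.mem_image]
      exact ⟨y j, hy j, by rw [hc, Int.mul_ediv_cancel_left _ hp0]⟩
    have h1 : g j * g j ∣ g j * (q * (c - r)) := by
      have := dvd_sub ha₀r hj'
      have e : a₀ - (t + p * r) - (a₀ - y j) = g j * (q * (c - r)) := by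
        rw [hq] at hc ⊢
        linear_combination hc
      rwa [e] at this
    have h2 : g j ∣ c - r := hcq.dvd_of_dvd_mul_left (Int.dvd_of_mul_dvd_mul_left (hg0 j) h1)
    exact hr c hcP (Int.emod_eq_emod_iff_emod_sub_eq_zero.2 (Int.emod_eq_zero_of_dvd h2))
  rw [← Finset.card_image_of_injective Pe hinj, ← Finset.card_union_of_disjoint hdisj]
  refine Finset.card_le_card (Finset.union_subset ?_ ?_)
  · intro z hz
    obtain ⟨y, hy, h⟩ := (mem_sum_dilates_iff l (fun _ => Pe) z).1 hz
    exact (mem_sum_dilates_iff l Ae z).2 ⟨y, fun m => hPA m (hy m), h⟩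
  · intro z hz
    obtain ⟨x, hx, h⟩ := Finset.mem_image.1 hz
    refine (mem_sum_dilates_iff l Ae z).2 ⟨f x, fun m => ?_, h⟩
    by_cases hm : m = j
    · rw [hm, hfj]; exact ha₀
    · exact hPA m (hfP x hx m hm)
end
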